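/- arXiv:2001.04676 — 2 statements merged into one kernel-verified Lean document; each statement's English description precedes it below -/
import Mathlib

section
/- Suppose there exist real numbers s, t > 2 with (s−2)(t−2) ≥ 4 such that E[w(X, Z_1)^s] < ∞ and E[|log w(X, Z_1)|^t] < ∞. Then there exists a constant c > 0 such that for every ℓ ≥ 1 the coupled level-ℓ correction satisfies Var[Δ_ℓ] ≤ c·2^{−βℓ}, where β = min(s(t−2)/(2t), 2). -/
open MeasureTheory ProbabilityTheory Finset
open scoped ENNReal

noncomputable section

/-- Expectation of a functional `f` of a data point `x ~ ν` together with `n` samples drawn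
i.i.d. (conditionally on `x`) from the proposal kernel `q`. -/
def jointExp {𝒳 𝒵 : Type*} [MeasurableSpace 𝒳] [MeasurableSpace 𝒵]
    (ν : Measure 𝒳) (q : Kernel 𝒳 𝒵) (n : ℕ) (f : 𝒳 → (Fin n → 𝒵) → ℝ) : ℝ :=
  ∫ x, ∫ zs, f x zs ∂(Measure.pi fun _ : Fin n => q x) ∂ν

/-- The coupled level correction `Δ = log Ȳ_{2n} − ½(log Ȳₙ⁽ᵃ⁾ + log Ȳₙ⁽ᵇ⁾)`, where the
averages `Ȳ` of the importance weights `w` are taken over all `2n` samples, the first `n`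
samples, and the last `n` samples respectively. -/
def mlmcCorrection {𝒳 𝒵 : Type*} (w : 𝒳 → 𝒵 → ℝ) (n : ℕ) (x : 𝒳)
    (zs : Fin (2 * n) → 𝒵) : ℝ :=
  Real.log ((∑ k, w x (zs k)) / (2 * n))
    - (Real.log ((∑ k : Fin n, w x (zs ⟨k.1, by have := k.2; omega⟩)) / n)
        + Real.log ((∑ k : Fin n, w x (zs ⟨n + k.1, by have := k.2; omega⟩)) / n)) / 2

/-- The variance of the coupled level correction (half-size `n`, i.e. `2n` samples). -/
def mlmcCorrectionVar {𝒳 𝒵 : Type*} [MeasurableSpace 𝒳] [MeasurableSpace 𝒵]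
    (ν : Measure 𝒳) (q : Kernel 𝒳 𝒵) (w : 𝒳 → 𝒵 → ℝ) (n : ℕ) : ℝ :=
  jointExp ν q (2 * n) (fun x zs =>
    (mlmcCorrection w n x zs - jointExp ν q (2 * n) (mlmcCorrection w n)) ^ 2)

/-!
Write `y` and `z` for the means of the normalized weights over the two half-samples. The
correction is the gap in Jensen's inequality for `log` at the midpoint of `y` and `z`, so it is
nonnegative and at most `(y - z)² / (8yz)`. Where `y` and `z` are both close to `1`, its square is
at most a multiple of `|y - 1| ^ r + |z - 1| ^ r` with `r = min s 4`, and the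
Marcinkiewicz–Zygmund inequality for the centred weights gives the order `n ^ (-(r / 2))`. The
event that one of them is far from `1` has probability of order `n ^ (-(s / 2))`; there the
correction is at most `|log y - log z| / 2`, whose `t`-th moment is bounded uniformly in `n` since
`-log y` is at most the mean of the `-log` of the weights, and truncating the square gives the
order `n ^ (-(s * (t - 2) / (2 * t)))`. These bounds hold for fixed `x`, with constants that are
integrable in `x`.
-/

theorem sq_le_inv_add_rpow_mul_abs_rpow {p a : ℝ} (hp : 2 ≤ p) (ha : 0 < a) (x : ℝ) :
    x ^ 2 ≤ a⁻¹ + a ^ (p / 2 - 1) * |x| ^ p := by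
  rcases le_total (a * x ^ 2) 1 with hx | hx
  · have : x ^ 2 ≤ a⁻¹ := (le_inv_mul_iff₀ ha).2 hx |>.trans_eq (mul_one _)
    exact this.trans (le_add_of_nonneg_right (by positivity))
  · have hx0 : 0 < |x| := abs_pos.2 fun h => by norm_num [h] at hx
    calc x ^ 2 ≤ (a * x ^ 2) ^ (p / 2 - 1) * x ^ 2 :=
          le_mul_of_one_le_left (sq_nonneg x) (Real.one_le_rpow hx (by linarith))
      _ = a ^ (p / 2 - 1) * |x| ^ p := by
          rw [Real.mul_rpow ha.le (sq_nonneg x), mul_assoc, ← sq_abs, ← Real.rpow_natCast,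
            ← Real.rpow_mul hx0.le, ← Real.rpow_add hx0]
          congr 2
          push_cast
          ring
      _ ≤ a⁻¹ + a ^ (p / 2 - 1) * |x| ^ p := le_add_of_nonneg_left (by positivity)

/-- Half of the constant in the Marcinkiewicz–Zygmund inequality
`integral_abs_sum_rpow_le`; no attempt is made at the sharp value. -/
def mzConst (p : ℝ) : ℝ := 2 ^ (p / 2) * (p + 1) ^ p

theorem one_le_mzConst {p : ℝ} (hp : 0 ≤ p) : 1 ≤ mzConst p :=
  one_le_mul_of_one_le_of_one_le (Real.one_le_rpow one_le_two (by positivity))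
    (Real.one_le_rpow (by linarith) hp)

-- In the next estimates `K` stands for the number of summands of an independent sum: each summand
-- then inflates the `p`-th moment by the factor `1 + 1 / (2 * K)`, in total by at most `2`.
theorem abs_one_add_rpow_le_of_abs_mul_le_one {p K u : ℝ} (hp : 2 ≤ p) (hK : 0 < K)
    (hu : |p * u| ≤ 1) :
    |1 + u| ^ p ≤ 1 + 1 / (2 * K) + p * u + mzConst p * K ^ (p / 2 - 1) * |u| ^ p := by
  have hp0 : 0 < p := by linarith
  have hu0 : 0 ≤ 1 + u := by nlinarith [(abs_le.1 hu).1]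
  have hexp : |1 + u| ^ p ≤ 1 + p * u + (p * u) ^ 2 := by
    calc |1 + u| ^ p ≤ Real.exp u ^ p := by
          rw [abs_of_nonneg hu0]
          exact Real.rpow_le_rpow hu0 (by linarith [Real.add_one_le_exp u]) hp0.le
      _ = Real.exp (p * u) := by rw [← Real.exp_mul, mul_comm]
      _ ≤ 1 + p * u + (p * u) ^ 2 := by
          linarith [(abs_le.1 (Real.abs_exp_sub_one_sub_id_le hu)).2]
  have hsq : (p * u) ^ 2 ≤ 1 / (2 * K) + (2 * K) ^ (p / 2 - 1) * |p * u| ^ p := by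
    simpa only [one_div] using sq_le_inv_add_rpow_mul_abs_rpow hp (by positivity) (p * u)
  have hconst : (2 * K) ^ (p / 2 - 1) * |p * u| ^ p ≤ mzConst p * K ^ (p / 2 - 1) * |u| ^ p := by
    rw [Real.mul_rpow zero_le_two hK.le, abs_mul, abs_of_pos hp0,
      Real.mul_rpow hp0.le (abs_nonneg u)]
    calc 2 ^ (p / 2 - 1) * K ^ (p / 2 - 1) * (p ^ p * |u| ^ p)
        ≤ 2 ^ (p / 2) * K ^ (p / 2 - 1) * ((p + 1) ^ p * |u| ^ p) := by
          gcongr <;> linarith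
      _ = mzConst p * K ^ (p / 2 - 1) * |u| ^ p := by rw [mzConst]; ring
  linarith

theorem abs_one_add_rpow_le_of_one_le_abs_mul {p K u : ℝ} (hp : 2 ≤ p) (hK : 1 ≤ K)
    (hu : 1 ≤ |p * u|) :
    |1 + u| ^ p ≤ p * u + mzConst p * K ^ (p / 2 - 1) * |u| ^ p := by
  have hp0 : 0 < p := by linarith
  have hpu : |p * u| = p * |u| := by rw [abs_mul, abs_of_pos hp0]
  have hpow : |1 + u| ^ p ≤ (p + 1) ^ p * |u| ^ p := by
    rw [← Real.mul_rpow (by positivity) (abs_nonneg u)]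
    refine Real.rpow_le_rpow (abs_nonneg _) ?_ hp0.le
    linarith [abs_add_le 1 u, abs_one (α := ℝ)]
  have hlin : -(p * u) ≤ (p + 1) ^ p * |u| ^ p := by
    calc -(p * u) ≤ |p * u| := neg_le_abs _
      _ ≤ |p * u| ^ p := Real.self_le_rpow_of_one_le hu (by linarith)
      _ = p ^ p * |u| ^ p := by rw [hpu, Real.mul_rpow hp0.le (abs_nonneg u)]
      _ ≤ (p + 1) ^ p * |u| ^ p := by gcongr; linarith
  have hconst : 2 * ((p + 1) ^ p * |u| ^ p) ≤ mzConst p * K ^ (p / 2 - 1) * |u| ^ p := by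
    have h2 : (2 : ℝ) ≤ 2 ^ (p / 2) := Real.self_le_rpow_of_one_le one_le_two (by linarith)
    have hK' : 1 ≤ K ^ (p / 2 - 1) := Real.one_le_rpow hK (by linarith)
    calc 2 * ((p + 1) ^ p * |u| ^ p) ≤ 2 ^ (p / 2) * ((p + 1) ^ p * |u| ^ p) * 1 := by
          rw [mul_one]; gcongr
      _ ≤ 2 ^ (p / 2) * ((p + 1) ^ p * |u| ^ p) * K ^ (p / 2 - 1) := by gcongr
      _ = mzConst p * K ^ (p / 2 - 1) * |u| ^ p := by rw [mzConst]; ring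
  linarith

theorem abs_one_add_rpow_le {p K : ℝ} (hp : 2 ≤ p) (hK : 1 ≤ K) (u : ℝ) :
    |1 + u| ^ p ≤ 1 + 1 / (2 * K) + p * u + mzConst p * K ^ (p / 2 - 1) * |u| ^ p := by
  rcases le_total |p * u| 1 with hu | hu
  · exact abs_one_add_rpow_le_of_abs_mul_le_one hp (by linarith) hu
  · have : 0 ≤ 1 + 1 / (2 * K) := by positivity
    linarith [abs_one_add_rpow_le_of_one_le_abs_mul hp hK hu]

theorem abs_add_rpow_le {p K : ℝ} (hp : 2 ≤ p) (hK : 1 ≤ K) (a b : ℝ) :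
    |a + b| ^ p ≤ (1 + 1 / (2 * K)) * |a| ^ p + p * (a * |a| ^ (p - 2) * b)
      + mzConst p * K ^ (p / 2 - 1) * |b| ^ p := by
  rcases eq_or_ne a 0 with rfl | ha
  · have hone : 1 ≤ mzConst p * K ^ (p / 2 - 1) :=
      one_le_mul_of_one_le_of_one_le (one_le_mzConst (by linarith))
        (Real.one_le_rpow hK (by linarith))
    simpa [Real.zero_rpow (by linarith : p ≠ 0)] using
      le_mul_of_one_le_left (Real.rpow_nonneg (abs_nonneg b) p) hone
  · have ha' : 0 < |a| := abs_pos.2 ha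
    have hsplit : |a| ^ p = |a| ^ (p - 2) * a ^ 2 := by
      rw [← sq_abs, ← Real.rpow_natCast, ← Real.rpow_add ha']
      norm_num
    have hscale (v : ℝ) : |a| ^ p * |v| ^ p = |a * v| ^ p := by
      rw [abs_mul, Real.mul_rpow ha'.le (abs_nonneg v)]
    calc |a + b| ^ p = |a| ^ p * |1 + b / a| ^ p := by rw [hscale, mul_add, mul_div_cancel₀ b ha,
          mul_one]
      _ ≤ |a| ^ p * (1 + 1 / (2 * K) + p * (b / a)
            + mzConst p * K ^ (p / 2 - 1) * |b / a| ^ p) := by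
          gcongr
          exact abs_one_add_rpow_le hp hK _
      _ = (1 + 1 / (2 * K)) * |a| ^ p + p * (|a| ^ p * (b / a))
            + mzConst p * K ^ (p / 2 - 1) * (|a| ^ p * |b / a| ^ p) := by ring
      _ = _ := by
          rw [hscale, mul_div_cancel₀ b ha, hsplit]
          congr 3
          field_simp

section MarcinkiewiczZygmund

variable {Ω : Type*} [MeasurableSpace Ω] {μ : Measure Ω} {p : ℝ}

theorem integrable_abs_rpow_iff_memLp {X : Ω → ℝ} (hp : 0 < p) (hX : AEStronglyMeasurable X μ) :
    Integrable (fun ω => |X ω| ^ p) μ ↔ MemLp X (ENNReal.ofReal p) μ := by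
  simpa only [ENNReal.toReal_ofReal hp.le, Real.norm_eq_abs] using
    integrable_norm_rpow_iff hX (ENNReal.ofReal_pos.2 hp).ne' ENNReal.ofReal_ne_top

theorem integrable_abs_rpow {X : Ω → ℝ} (hp : 0 < p) (hX : MemLp X (ENNReal.ofReal p) μ) :
    Integrable (fun ω => |X ω| ^ p) μ :=
  (integrable_abs_rpow_iff_memLp hp hX.1).2 hX

theorem integrable_mul_abs_rpow_sub_two [IsFiniteMeasure μ] {X : Ω → ℝ} (hp : 2 ≤ p)
    (hX : MemLp X (ENNReal.ofReal p) μ) : Integrable (fun ω => X ω * |X ω| ^ (p - 2)) μ := by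
  have hmeas : AEStronglyMeasurable (fun ω => X ω * |X ω| ^ (p - 2)) μ :=
    (hX.1.aemeasurable.mul (hX.1.aemeasurable.abs.pow_const _)).aestronglyMeasurable
  have hpow : Integrable (fun ω => |X ω| ^ (p - 1)) μ :=
    integrable_norm_rpow_of_le hX.1 (by linarith) (by linarith) (by linarith)
      (integrable_abs_rpow (by linarith) hX)
  refine hpow.mono' hmeas (.of_forall fun ω => le_of_eq ?_)
  rw [norm_mul, Real.norm_eq_abs, Real.norm_of_nonneg (by positivity),
    ← Real.rpow_one_add' (abs_nonneg _) (by linarith)]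
  ring_nf

variable [IsProbabilityMeasure μ]

theorem integral_abs_rpow_le_one_add {r : ℝ} {X : Ω → ℝ} (hr : 0 < r) (hrp : r ≤ p)
    (hX : MemLp X (ENNReal.ofReal p) μ) :
    ∫ ω, |X ω| ^ r ∂μ ≤ 1 + ∫ ω, |X ω| ^ p ∂μ := by
  have hXr := integrable_abs_rpow hr (hX.mono_exponent (ENNReal.ofReal_le_ofReal hrp))
  have hXp := integrable_abs_rpow (hr.trans_le hrp) hX
  have hpow {u : ℝ} (hu : 0 ≤ u) : u ^ r ≤ 1 + u ^ p := by
    rcases le_total u 1 with h | h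
    · exact (Real.rpow_le_one hu h hr.le).trans (le_add_of_nonneg_right (Real.rpow_nonneg hu p))
    · exact (Real.rpow_le_rpow_of_exponent_le h hrp).trans (le_add_of_nonneg_left zero_le_one)
  calc ∫ ω, |X ω| ^ r ∂μ ≤ ∫ ω, (1 + |X ω| ^ p) ∂μ :=
        integral_mono hXr ((integrable_const 1).add hXp) fun ω => hpow (abs_nonneg (X ω))
    _ = 1 + ∫ ω, |X ω| ^ p ∂μ := by simp [integral_add (integrable_const _) hXp]

theorem integral_abs_add_rpow_le {X Y : Ω → ℝ} {K : ℝ} (hp : 2 ≤ p) (hK : 1 ≤ K)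
    (hX : MemLp X (ENNReal.ofReal p) μ) (hY : MemLp Y (ENNReal.ofReal p) μ)
    (hXY : IndepFun X Y μ) (hY0 : ∫ ω, Y ω ∂μ = 0) :
    ∫ ω, |X ω + Y ω| ^ p ∂μ ≤ (1 + 1 / (2 * K)) * ∫ ω, |X ω| ^ p ∂μ
      + mzConst p * K ^ (p / 2 - 1) * ∫ ω, |Y ω| ^ p ∂μ := by
  have hp0 : 0 < p := by linarith
  have hYint : Integrable Y μ := hY.integrable (ENNReal.one_le_ofReal.2 (by linarith))
  have hgint := integrable_mul_abs_rpow_sub_two hp hX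
  have hindep : IndepFun (fun ω => X ω * |X ω| ^ (p - 2)) Y μ :=
    hXY.comp (φ := fun x : ℝ => x * |x| ^ (p - 2)) (by fun_prop) measurable_id
  have hcross : ∫ ω, X ω * |X ω| ^ (p - 2) * Y ω ∂μ = 0 := by
    rw [hindep.integral_fun_mul_eq_mul_integral hgint.1 hYint.1, hY0, mul_zero]
  have hXi := (integrable_abs_rpow hp0 hX).const_mul (1 + 1 / (2 * K))
  have hYi := (integrable_abs_rpow hp0 hY).const_mul (mzConst p * K ^ (p / 2 - 1))
  have hXYi : Integrable (fun ω => p * (X ω * |X ω| ^ (p - 2) * Y ω)) μ :=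
    (hindep.integrable_mul hgint hYint).const_mul p
  have hXsum := hXi.fun_add hXYi
  calc ∫ ω, |X ω + Y ω| ^ p ∂μ
      ≤ ∫ ω, ((1 + 1 / (2 * K)) * |X ω| ^ p + p * (X ω * |X ω| ^ (p - 2) * Y ω)
          + mzConst p * K ^ (p / 2 - 1) * |Y ω| ^ p) ∂μ :=
        integral_mono (integrable_abs_rpow hp0 (hX.add hY)) (hXsum.fun_add hYi)
          fun ω => abs_add_rpow_le hp hK (X ω) (Y ω)
    _ = _ := by
        rw [integral_add hXsum hYi, integral_add hXi hXYi, integral_const_mul,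
          integral_const_mul, integral_const_mul, hcross, mul_zero, add_zero]

theorem integral_abs_sum_rpow_le_pow_mul {ι : Type*} {ξ : ι → Ω → ℝ} {K : ℝ} (hp : 2 ≤ p)
    (hK : 1 ≤ K) (hξ : ∀ i, MemLp (ξ i) (ENNReal.ofReal p) μ) (hindep : iIndepFun ξ μ)
    (hmean : ∀ i, ∫ ω, ξ i ω ∂μ = 0) (S : Finset ι) :
    ∫ ω, |∑ i ∈ S, ξ i ω| ^ p ∂μ ≤
      (1 + 1 / (2 * K)) ^ #S * (mzConst p * K ^ (p / 2 - 1) * ∑ i ∈ S, ∫ ω, |ξ i ω| ^ p ∂μ) := by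
  classical
  induction S using Finset.induction_on with
  | empty => simp [Real.zero_rpow (by linarith : p ≠ 0)]
  | insert i S hi ih =>
    set B := mzConst p * K ^ (p / 2 - 1)
    have hB0 : 0 ≤ B := mul_nonneg (zero_le_one.trans (one_le_mzConst (by linarith)))
      (Real.rpow_nonneg (by linarith) _)
    set ρ := 1 + 1 / (2 * K)
    have hρ1 : 1 ≤ ρ := le_add_of_nonneg_right (by positivity)
    have hindep' : IndepFun (fun ω => ∑ j ∈ S, ξ j ω) (ξ i) μ := by
      simpa only [Finset.sum_fn] using
        hindep.indepFun_finsetSum_of_notMem₀ (fun j => (hξ j).1.aemeasurable) hi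
    calc ∫ ω, |∑ j ∈ insert i S, ξ j ω| ^ p ∂μ
        = ∫ ω, |∑ j ∈ S, ξ j ω + ξ i ω| ^ p ∂μ := by simp only [sum_insert hi, add_comm]
      _ ≤ ρ * ∫ ω, |∑ j ∈ S, ξ j ω| ^ p ∂μ + B * ∫ ω, |ξ i ω| ^ p ∂μ :=
          integral_abs_add_rpow_le hp hK (memLp_finsetSum S fun j _ => hξ j) (hξ i) hindep'
            (hmean i)
      _ ≤ ρ * (ρ ^ #S * (B * ∑ j ∈ S, ∫ ω, |ξ j ω| ^ p ∂μ))
            + ρ ^ (#S + 1) * (B * ∫ ω, |ξ i ω| ^ p ∂μ) := by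
          refine add_le_add (mul_le_mul_of_nonneg_left ih (by positivity)) ?_
          exact le_mul_of_one_le_left (by positivity) (one_le_pow₀ hρ1)
      _ = ρ ^ #(insert i S) * (B * ∑ j ∈ insert i S, ∫ ω, |ξ j ω| ^ p ∂μ) := by
          rw [card_insert_of_notMem hi, sum_insert hi]
          ring

theorem one_add_one_div_two_mul_pow_le_two (n : ℕ) : (1 + 1 / (2 * (n : ℝ))) ^ n ≤ 2 := by
  rcases eq_or_ne n 0 with rfl | hn
  · norm_num
  · have hexp : Real.exp (1 / 2) ≤ 2 :=
      (Real.le_log_iff_exp_le two_pos).1 (by linarith [Real.log_two_gt_d9])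
    calc (1 + 1 / (2 * (n : ℝ))) ^ n ≤ Real.exp (1 / (2 * n)) ^ n := by
          gcongr
          linarith [Real.add_one_le_exp (1 / (2 * (n : ℝ)))]
      _ = Real.exp (1 / 2) := by
          rw [← Real.exp_nat_mul]
          congr 1
          field_simp
      _ ≤ 2 := hexp

theorem integral_abs_sum_rpow_le {ι : Type*} {ξ : ι → Ω → ℝ} (hp : 2 ≤ p)
    (hξ : ∀ i, MemLp (ξ i) (ENNReal.ofReal p) μ) (hindep : iIndepFun ξ μ)
    (hmean : ∀ i, ∫ ω, ξ i ω ∂μ = 0) (S : Finset ι) :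
    ∫ ω, |∑ i ∈ S, ξ i ω| ^ p ∂μ ≤
      2 * mzConst p * (#S : ℝ) ^ (p / 2 - 1) * ∑ i ∈ S, ∫ ω, |ξ i ω| ^ p ∂μ := by
  rcases S.eq_empty_or_nonempty with rfl | hS
  · simp [Real.zero_rpow (by linarith : p ≠ 0)]
  · have hK : (1 : ℝ) ≤ #S := by exact_mod_cast hS.card_pos
    have hmz : 0 ≤ mzConst p := zero_le_one.trans (one_le_mzConst (by linarith))
    calc ∫ ω, |∑ i ∈ S, ξ i ω| ^ p ∂μ
        ≤ (1 + 1 / (2 * (#S : ℝ))) ^ #S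
            * (mzConst p * (#S : ℝ) ^ (p / 2 - 1) * ∑ i ∈ S, ∫ ω, |ξ i ω| ^ p ∂μ) :=
          integral_abs_sum_rpow_le_pow_mul hp hK hξ hindep hmean S
      _ ≤ 2 * (mzConst p * (#S : ℝ) ^ (p / 2 - 1) * ∑ i ∈ S, ∫ ω, |ξ i ω| ^ p ∂μ) := by
          gcongr
          exact one_add_one_div_two_mul_pow_le_two #S
      _ = _ := by ring

end MarcinkiewiczZygmund

theorem measurePreserving_comp_of_injective {𝒵 ι κ : Type*} [MeasurableSpace 𝒵] [Fintype ι]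
    [Fintype κ] (Q : Measure 𝒵) [IsProbabilityMeasure Q] {e : ι → κ} (he : Function.Injective e) :
    MeasurePreserving (fun zs : κ → 𝒵 => zs ∘ e) (Measure.pi fun _ => Q)
      (Measure.pi fun _ => Q) where
  measurable := by fun_prop
  map_eq := by
    simpa only [Measure.infinitePi_eq_pi] using!
      Measure.map_infinitePi_infinitePi_of_inj (P := fun _ : κ => Q) he

theorem integral_comp_of_injective {𝒵 ι κ : Type*} [MeasurableSpace 𝒵] [Fintype ι] [Fintype κ]
    {Q : Measure 𝒵} [IsProbabilityMeasure Q] {e : ι → κ} (he : Function.Injective e)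
    {G : (ι → 𝒵) → ℝ} (hG : AEStronglyMeasurable G (Measure.pi fun _ => Q)) :
    ∫ zs, G (zs ∘ e) ∂(Measure.pi fun _ => Q) = ∫ zs, G zs ∂(Measure.pi fun _ => Q) := by
  have h := measurePreserving_comp_of_injective Q he
  rw [← h.map_eq] at hG ⊢
  exact (integral_map h.aemeasurable hG).symm

section SampleMean

variable {𝒵 : Type*} {n : ℕ} {f : 𝒵 → ℝ}

/-- The empirical mean of `f` over the sample `zs`; it is `0` for the empty sample. -/
def sampleMean (f : 𝒵 → ℝ) (zs : Fin n → 𝒵) : ℝ := (∑ k, f (zs k)) / n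

theorem sampleMean_pos (hn : n ≠ 0) (hf : ∀ z, 0 < f z) (zs : Fin n → 𝒵) :
    0 < sampleMean f zs := by
  have := Fin.pos_iff_nonempty.1 (Nat.pos_of_ne_zero hn)
  exact div_pos (sum_pos (fun k _ => hf (zs k)) univ_nonempty)
    (Nat.cast_pos.2 (Nat.pos_of_ne_zero hn))

theorem sampleMean_sub_const (hn : n ≠ 0) (m : ℝ) (zs : Fin n → 𝒵) :
    sampleMean f zs - m = (∑ k, (f (zs k) - m)) / n := by
  have hn' : (n : ℝ) ≠ 0 := Nat.cast_ne_zero.2 hn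
  simp only [sampleMean, sum_sub_distrib, sum_const, card_univ, Fintype.card_fin, nsmul_eq_mul]
  field_simp

theorem neg_log_sampleMean_le (hn : n ≠ 0) (hf : ∀ z, 0 < f z) (zs : Fin n → 𝒵) :
    -Real.log (sampleMean f zs) ≤ sampleMean (fun z => |Real.log (f z)|) zs := by
  have hn' : (n : ℝ) ≠ 0 := Nat.cast_ne_zero.2 hn
  have hjensen := strictConcaveOn_log_Ioi.concaveOn.le_map_sum (t := univ)
    (w := fun _ : Fin n => (n : ℝ)⁻¹) (p := fun k => f (zs k)) (fun _ _ => by positivity)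
    (by simp [hn']) (fun k _ => hf (zs k))
  simp only [smul_eq_mul, inv_mul_eq_div, ← sum_div] at hjensen
  calc -Real.log (sampleMean f zs) ≤ (∑ k, -Real.log (f (zs k))) / n := by
        rw [sum_neg_distrib, neg_div]
        exact neg_le_neg hjensen
    _ ≤ sampleMean (fun z => |Real.log (f z)|) zs := by
        rw [sampleMean]
        gcongr
        exact neg_le_abs _

theorem sampleMean_rpow_le {t : ℝ} (ht : 1 ≤ t) (hn : n ≠ 0) (hf : ∀ z, 0 ≤ f z)
    (zs : Fin n → 𝒵) : sampleMean f zs ^ t ≤ sampleMean (fun z => f z ^ t) zs := by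
  have hn' : (n : ℝ) ≠ 0 := Nat.cast_ne_zero.2 hn
  simpa only [sampleMean, inv_mul_eq_div, ← sum_div] using
    Real.rpow_arith_mean_le_arith_mean_rpow univ (fun _ : Fin n => (n : ℝ)⁻¹) (fun k => f (zs k))
      (fun _ _ => by positivity) (by simp [hn']) (fun k _ => hf (zs k)) ht

theorem abs_log_sampleMean_rpow_le {t : ℝ} (ht : 1 ≤ t) (hn : n ≠ 0) (hf : ∀ z, 0 < f z)
    (zs : Fin n → 𝒵) :
    |Real.log (sampleMean f zs)| ^ t ≤
      t ^ t * (sampleMean f zs + sampleMean (fun z => |Real.log (f z)| ^ t) zs) := by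
  have ht0 : 0 < t := by linarith
  have hy := sampleMean_pos hn hf zs
  have hL : 0 ≤ sampleMean (fun z => |Real.log (f z)| ^ t) zs := by
    rw [sampleMean]
    positivity
  rcases le_total 1 (sampleMean f zs) with h1 | h1
  · calc |Real.log (sampleMean f zs)| ^ t ≤ (t * sampleMean f zs ^ t⁻¹) ^ t := by
          rw [abs_of_nonneg (Real.log_nonneg h1)]
          refine Real.rpow_le_rpow (Real.log_nonneg h1) ?_ ht0.le
          simpa only [div_inv_eq_mul, mul_comm] using
            Real.log_le_rpow_div hy.le (inv_pos.2 ht0)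
      _ = t ^ t * sampleMean f zs := by
          rw [Real.mul_rpow ht0.le (by positivity), Real.rpow_inv_rpow hy.le ht0.ne']
      _ ≤ _ := by
          gcongr
          exact le_add_of_nonneg_right hL
  · calc |Real.log (sampleMean f zs)| ^ t
        ≤ sampleMean (fun z => |Real.log (f z)|) zs ^ t := by
          rw [abs_of_nonpos (Real.log_nonpos hy.le h1)]
          exact Real.rpow_le_rpow (neg_nonneg.2 (Real.log_nonpos hy.le h1))
            (neg_log_sampleMean_le hn hf zs) ht0.le
      _ ≤ sampleMean (fun z => |Real.log (f z)| ^ t) zs :=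
          sampleMean_rpow_le ht hn (fun _ => abs_nonneg _) zs
      _ ≤ t ^ t * (sampleMean f zs + sampleMean (fun z => |Real.log (f z)| ^ t) zs) := by
          refine (le_add_of_nonneg_left hy.le).trans (le_mul_of_one_le_left (by positivity) ?_)
          exact Real.one_le_rpow ht ht0.le

variable [MeasurableSpace 𝒵] {Q : Measure 𝒵} [IsProbabilityMeasure Q]

theorem memLp_sampleMean {p : ℝ≥0∞} (hf : MemLp f p Q) :
    MemLp (sampleMean f : (Fin n → 𝒵) → ℝ) p (Measure.pi fun _ => Q) := by
  have hsum : MemLp (fun zs : Fin n → 𝒵 => ∑ k, f (zs k)) p (Measure.pi fun _ => Q) :=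
    memLp_finsetSum _ fun k _ => hf.comp_measurePreserving (measurePreserving_eval _ k)
  simpa only [inv_mul_eq_div] using! hsum.const_mul (n : ℝ)⁻¹

theorem integrable_sampleMean (hf : Integrable f Q) :
    Integrable (sampleMean f : (Fin n → 𝒵) → ℝ) (Measure.pi fun _ => Q) :=
  memLp_one_iff_integrable.1 (memLp_sampleMean (memLp_one_iff_integrable.2 hf))

theorem integral_sampleMean (hn : n ≠ 0) (hf : Integrable f Q) :
    ∫ zs : Fin n → 𝒵, sampleMean f zs ∂(Measure.pi fun _ => Q) = ∫ z, f z ∂Q := by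
  have hn' : (n : ℝ) ≠ 0 := Nat.cast_ne_zero.2 hn
  have heval (k : Fin n) : ∫ zs, f (zs k) ∂(Measure.pi fun _ => Q) = ∫ z, f z ∂Q :=
    integral_comp_eval (μ := fun _ => Q) hf.1
  simp only [sampleMean]
  rw [integral_div, integral_finsetSum _ fun k _ => integrable_comp_eval hf]
  simp only [heval, sum_const, card_univ, Fintype.card_fin, nsmul_eq_mul]
  field_simp

theorem integral_abs_sampleMean_sub_rpow_le {p : ℝ} (hp : 2 ≤ p) (hn : n ≠ 0)
    (hf : MemLp f (ENNReal.ofReal p) Q) :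
    ∫ zs : Fin n → 𝒵, |sampleMean f zs - ∫ z, f z ∂Q| ^ p ∂(Measure.pi fun _ => Q) ≤
      2 * mzConst p * (n : ℝ) ^ (-(p / 2)) * ∫ z, |f z - ∫ z', f z' ∂Q| ^ p ∂Q := by
  have hn' : (0 : ℝ) < n := Nat.cast_pos.2 (Nat.pos_of_ne_zero hn)
  set g : 𝒵 → ℝ := fun z => f z - ∫ z', f z' ∂Q
  have hg : MemLp g (ENNReal.ofReal p) Q := hf.sub (memLp_const _)
  have hfint : Integrable f Q := hf.integrable (ENNReal.one_le_ofReal.2 (by linarith))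
  have hgint : ∫ z, g z ∂Q = 0 := by
    simp [g, integral_sub hfint (integrable_const _)]
  have hmz := integral_abs_sum_rpow_le (μ := Measure.pi fun _ : Fin n => Q)
    (ξ := fun k zs => g (zs k)) hp
    (fun k => hg.comp_measurePreserving (measurePreserving_eval _ k))
    (iIndepFun_pi fun _ => hg.1.aemeasurable)
    (fun k => (integral_comp_eval (μ := fun _ => Q) hg.1).trans hgint) univ
  have heval (k : Fin n) :
      ∫ zs, |g (zs k)| ^ p ∂(Measure.pi fun _ => Q) = ∫ z, |g z| ^ p ∂Q :=
    integral_comp_eval (μ := fun _ => Q) (f := fun z => |g z| ^ p)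
      (integrable_abs_rpow (by linarith) hg).1
  simp only [heval, sum_const, card_univ, Fintype.card_fin, nsmul_eq_mul] at hmz
  have hpow : ((n : ℝ) ^ p)⁻¹ * ((n : ℝ) ^ (p / 2 - 1) * n) = (n : ℝ) ^ (-(p / 2)) := by
    rw [← Real.rpow_neg hn'.le, ← Real.rpow_add_one hn'.ne', ← Real.rpow_add hn']
    ring_nf
  calc ∫ zs : Fin n → 𝒵, |sampleMean f zs - ∫ z, f z ∂Q| ^ p ∂(Measure.pi fun _ => Q)
      = ((n : ℝ) ^ p)⁻¹ * ∫ zs : Fin n → 𝒵, |∑ k, g (zs k)| ^ p ∂(Measure.pi fun _ => Q) := by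
        rw [← integral_const_mul]
        refine integral_congr_ae (.of_forall fun zs => ?_)
        simp only [sampleMean_sub_const hn, abs_div, Nat.abs_cast, g]
        rw [Real.div_rpow (abs_nonneg _) hn'.le, div_eq_inv_mul]
    _ ≤ ((n : ℝ) ^ p)⁻¹
          * (2 * mzConst p * (n : ℝ) ^ (p / 2 - 1) * (n * ∫ z, |g z| ^ p ∂Q)) := by gcongr
    _ = _ := by rw [← hpow]; ring

theorem integrable_abs_log_sampleMean_rpow {t : ℝ} (ht : 1 ≤ t) (hn : n ≠ 0)
    (hf : ∀ z, 0 < f z) (hfint : Integrable f Q)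
    (hlog : Integrable (fun z => |Real.log (f z)| ^ t) Q) :
    Integrable (fun zs : Fin n → 𝒵 => |Real.log (sampleMean f zs)| ^ t)
      (Measure.pi fun _ => Q) := by
  refine (((integrable_sampleMean hfint).add (integrable_sampleMean hlog)).const_mul (t ^ t)).mono'
    ?_ (.of_forall fun zs => ?_)
  · exact ((integrable_sampleMean hfint).1.aemeasurable.log.abs.pow_const t).aestronglyMeasurable
  · rw [Real.norm_of_nonneg (by positivity)]
    exact abs_log_sampleMean_rpow_le ht hn hf zs

theorem integral_abs_log_sampleMean_rpow_le {t : ℝ} (ht : 1 ≤ t) (hn : n ≠ 0)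
    (hf : ∀ z, 0 < f z) (hfint : Integrable f Q)
    (hlog : Integrable (fun z => |Real.log (f z)| ^ t) Q) :
    ∫ zs : Fin n → 𝒵, |Real.log (sampleMean f zs)| ^ t ∂(Measure.pi fun _ => Q) ≤
      t ^ t * (∫ z, f z ∂Q + ∫ z, |Real.log (f z)| ^ t ∂Q) := by
  calc ∫ zs : Fin n → 𝒵, |Real.log (sampleMean f zs)| ^ t ∂(Measure.pi fun _ => Q)
      ≤ ∫ zs : Fin n → 𝒵,
          t ^ t * (sampleMean f zs + sampleMean (fun z => |Real.log (f z)| ^ t) zs)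
          ∂(Measure.pi fun _ => Q) :=
        integral_mono (integrable_abs_log_sampleMean_rpow ht hn hf hfint hlog)
          (((integrable_sampleMean hfint).fun_add (integrable_sampleMean hlog)).const_mul (t ^ t))
          fun zs => abs_log_sampleMean_rpow_le ht hn hf zs
    _ = t ^ t * (∫ z, f z ∂Q + ∫ z, |Real.log (f z)| ^ t ∂Q) := by
        rw [integral_const_mul,
          integral_add (integrable_sampleMean hfint) (integrable_sampleMean hlog),
          integral_sampleMean hn hfint, integral_sampleMean hn hlog]

end SampleMean

section LogGap

/-- The Jensen gap of the logarithm at the midpoint of `y` and `z`. The coupled correction is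
this gap evaluated at the means of the two half-samples. -/
def logGap (y z : ℝ) : ℝ := Real.log ((y + z) / 2) - (Real.log y + Real.log z) / 2

variable {y z : ℝ}

theorem two_mul_logGap (hy : 0 < y) (hz : 0 < z) :
    2 * logGap y z = Real.log (1 + (y - z) ^ 2 / (4 * y * z)) := by
  have hratio : 1 + (y - z) ^ 2 / (4 * y * z) = ((y + z) / 2) ^ 2 / (y * z) := by
    field_simp
    ring
  rw [hratio, Real.log_div (by positivity) (by positivity), Real.log_mul hy.ne' hz.ne',
    Real.log_pow, logGap]
  push_cast
  ring

theorem logGap_nonneg (hy : 0 < y) (hz : 0 < z) : 0 ≤ logGap y z := by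
  have : 0 ≤ Real.log (1 + (y - z) ^ 2 / (4 * y * z)) :=
    Real.log_nonneg (le_add_of_nonneg_right (by positivity))
  linarith [two_mul_logGap hy hz]

theorem logGap_le_sq_div (hy : 0 < y) (hz : 0 < z) : logGap y z ≤ (y - z) ^ 2 / (8 * y * z) := by
  have hlog := Real.log_le_sub_one_of_pos (x := 1 + (y - z) ^ 2 / (4 * y * z)) (by positivity)
  have hhalf : (y - z) ^ 2 / (4 * y * z) = 2 * ((y - z) ^ 2 / (8 * y * z)) := by
    field_simp
    ring
  linarith [two_mul_logGap hy hz]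

theorem logGap_le_abs_log_sub (hy : 0 < y) (hz : 0 < z) :
    logGap y z ≤ |Real.log y - Real.log z| / 2 := by
  rw [logGap]
  rcases le_total y z with h | h
  · have : Real.log ((y + z) / 2) ≤ Real.log z := Real.log_le_log (by positivity) (by linarith)
    linarith [neg_le_abs (Real.log y - Real.log z)]
  · have : Real.log ((y + z) / 2) ≤ Real.log y := Real.log_le_log (by positivity) (by linarith)
    linarith [le_abs_self (Real.log y - Real.log z)]

theorem logGap_rpow_le {t : ℝ} (ht : 0 ≤ t) (hy : 0 < y) (hz : 0 < z) :
    logGap y z ^ t ≤ |Real.log y| ^ t + |Real.log z| ^ t := by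
  have hmax : logGap y z ≤ max |Real.log y| |Real.log z| := by
    have := abs_sub (Real.log y) (Real.log z)
    linarith [logGap_le_abs_log_sub hy hz, le_max_left |Real.log y| |Real.log z|,
      le_max_right |Real.log y| |Real.log z|]
  calc logGap y z ^ t ≤ max |Real.log y| |Real.log z| ^ t :=
        Real.rpow_le_rpow (logGap_nonneg hy hz) hmax ht
    _ ≤ |Real.log y| ^ t + |Real.log z| ^ t := by
        rcases max_choice |Real.log y| |Real.log z| with h | h <;> rw [h]
        · exact le_add_of_nonneg_right (by positivity)
        · exact le_add_of_nonneg_left (by positivity)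

theorem logGap_sq_le_of_abs_sub_one_le_half {r : ℝ} (hr0 : 0 < r) (hr : r ≤ 4)
    (hy : |y - 1| ≤ 1 / 2) (hz : |z - 1| ≤ 1 / 2) :
    logGap y z ^ 2 ≤ 2 * (|y - 1| ^ r + |z - 1| ^ r) := by
  have hy' : 1 / 2 ≤ y := by linarith [(abs_le.1 hy).1]
  have hz' : 1 / 2 ≤ z := by linarith [(abs_le.1 hz).1]
  have hy0 : 0 < y := by linarith
  have hz0 : 0 < z := by linarith
  have hgap : logGap y z ≤ (y - 1) ^ 2 + (z - 1) ^ 2 := by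
    calc logGap y z ≤ (y - z) ^ 2 / (8 * y * z) := logGap_le_sq_div hy0 hz0
      _ ≤ (y - z) ^ 2 / 2 := by
          gcongr
          nlinarith
      _ ≤ (y - 1) ^ 2 + (z - 1) ^ 2 := by nlinarith [sq_nonneg ((y - 1) + (z - 1))]
  have hfour {u : ℝ} (hu : |u| ≤ 1 / 2) : (u ^ 2) ^ 2 ≤ |u| ^ r := by
    rw [← pow_mul, ← Even.pow_abs (by decide), ← Real.rpow_natCast]
    exact Real.rpow_le_rpow_of_exponent_ge' (abs_nonneg u) (by linarith) hr0.le
      (by norm_num; exact hr)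
  calc logGap y z ^ 2 ≤ ((y - 1) ^ 2 + (z - 1) ^ 2) ^ 2 :=
        pow_le_pow_left₀ (logGap_nonneg hy0 hz0) hgap 2
    _ ≤ 2 * (((y - 1) ^ 2) ^ 2 + ((z - 1) ^ 2) ^ 2) := add_sq_le
    _ ≤ 2 * (|y - 1| ^ r + |z - 1| ^ r) := by gcongr <;> exact hfour ‹_›

theorem logGap_sq_le_of_half_lt {s t a : ℝ} (hs : 0 ≤ s) (ht : 2 ≤ t) (ha : 0 < a) (hy : 0 < y)
    (hz : 0 < z) (hfar : 1 / 2 < |y - 1| ∨ 1 / 2 < |z - 1|) :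
    logGap y z ^ 2 ≤ a ^ (t / 2 - 1) * (|Real.log y| ^ t + |Real.log z| ^ t)
      + a⁻¹ * (2 ^ s * (|y - 1| ^ s + |z - 1| ^ s)) := by
  have hone {u : ℝ} (hu : 1 / 2 < |u|) : 1 ≤ 2 ^ s * |u| ^ s := by
    rw [← Real.mul_rpow zero_le_two (abs_nonneg u)]
    exact Real.one_le_rpow (by linarith) hs
  have hmarkov : 1 ≤ 2 ^ s * (|y - 1| ^ s + |z - 1| ^ s) := by
    rw [mul_add]
    rcases hfar with h | h
    · exact (hone h).trans (le_add_of_nonneg_right (by positivity))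
    · exact (hone h).trans (le_add_of_nonneg_left (by positivity))
  calc logGap y z ^ 2 ≤ a⁻¹ + a ^ (t / 2 - 1) * logGap y z ^ t := by
        simpa only [abs_of_nonneg (logGap_nonneg hy hz)] using
          sq_le_inv_add_rpow_mul_abs_rpow ht ha (logGap y z)
    _ ≤ a⁻¹ * (2 ^ s * (|y - 1| ^ s + |z - 1| ^ s))
          + a ^ (t / 2 - 1) * (|Real.log y| ^ t + |Real.log z| ^ t) := by
        gcongr
        · exact le_mul_of_one_le_right (by positivity) hmarkov
        · exact logGap_rpow_le (by linarith) hy hz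
    _ = _ := add_comm _ _

/-- The contribution of one half-sample mean `y` to the bound `logGap_sq_le` on the squared
correction; `a` is the inverse of the level at which the squared gap is truncated. -/
def gapMajorant (r s t a y : ℝ) : ℝ :=
  2 * |y - 1| ^ r + a ^ (t / 2 - 1) * |Real.log y| ^ t + a⁻¹ * 2 ^ s * |y - 1| ^ s

theorem logGap_sq_le {r s t a : ℝ} (hr0 : 0 < r) (hr : r ≤ 4) (hs : 0 ≤ s) (ht : 2 ≤ t)
    (ha : 0 < a) (hy : 0 < y) (hz : 0 < z) :
    logGap y z ^ 2 ≤ gapMajorant r s t a y + gapMajorant r s t a z := by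
  have hsplit : gapMajorant r s t a y + gapMajorant r s t a z =
      2 * (|y - 1| ^ r + |z - 1| ^ r)
        + (a ^ (t / 2 - 1) * (|Real.log y| ^ t + |Real.log z| ^ t)
          + a⁻¹ * (2 ^ s * (|y - 1| ^ s + |z - 1| ^ s))) := by
    simp only [gapMajorant]
    ring
  rw [hsplit]
  by_cases hnear : |y - 1| ≤ 1 / 2 ∧ |z - 1| ≤ 1 / 2
  · exact (logGap_sq_le_of_abs_sub_one_le_half hr0 hr hnear.1 hnear.2).trans
      (le_add_of_nonneg_right (by positivity))
  · rw [not_and_or, not_le, not_le] at hnear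
    exact (logGap_sq_le_of_half_lt hs ht ha hy hz hnear).trans
      (le_add_of_nonneg_left (by positivity))

end LogGap

section Halves

variable {𝒳 𝒵 : Type*} {n : ℕ}

/-- The inclusion of the indices of the first `n` of `2 * n` samples. -/
def firstHalf (n : ℕ) (k : Fin n) : Fin (2 * n) := ⟨k.1, by have := k.2; omega⟩

/-- The inclusion of the indices of the last `n` of `2 * n` samples. -/
def secondHalf (n : ℕ) (k : Fin n) : Fin (2 * n) := ⟨n + k.1, by have := k.2; omega⟩

theorem firstHalf_injective : Function.Injective (firstHalf n) := fun _ _ h =>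
  Fin.ext (Fin.mk.inj_iff.1 h)

theorem secondHalf_injective : Function.Injective (secondHalf n) := fun _ _ h =>
  Fin.ext (Nat.add_left_cancel (Fin.mk.inj_iff.1 h))

theorem sum_eq_sum_firstHalf_add_sum_secondHalf (g : Fin (2 * n) → ℝ) :
    ∑ k, g k = ∑ k, g (firstHalf n k) + ∑ k, g (secondHalf n k) := by
  rw [← Equiv.sum_comp (finCongr (two_mul n).symm) g, Fin.sum_univ_add]
  rfl

theorem mlmcCorrection_eq_logGap (w : 𝒳 → 𝒵 → ℝ) (x : 𝒳) (zs : Fin (2 * n) → 𝒵) :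
    mlmcCorrection w n x zs =
      logGap (sampleMean (w x) (zs ∘ firstHalf n)) (sampleMean (w x) (zs ∘ secondHalf n)) := by
  have hmid : (∑ k, w x (zs k)) / (2 * n) =
      (sampleMean (w x) (zs ∘ firstHalf n) + sampleMean (w x) (zs ∘ secondHalf n)) / 2 := by
    rw [sum_eq_sum_firstHalf_add_sum_secondHalf fun k => w x (zs k)]
    simp only [sampleMean, Function.comp_apply]
    ring
  rw [mlmcCorrection, hmid, logGap]
  rfl

theorem mlmcCorrection_sq_le {w : 𝒳 → 𝒵 → ℝ} {x : 𝒳} {r s t a : ℝ} (hr0 : 0 < r) (hr : r ≤ 4)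
    (hs : 0 ≤ s) (ht : 2 ≤ t) (ha : 0 < a) (hn : n ≠ 0) (hw : ∀ z, 0 < w x z)
    (zs : Fin (2 * n) → 𝒵) :
    mlmcCorrection w n x zs ^ 2 ≤ gapMajorant r s t a (sampleMean (w x) (zs ∘ firstHalf n))
      + gapMajorant r s t a (sampleMean (w x) (zs ∘ secondHalf n)) := by
  rw [mlmcCorrection_eq_logGap]
  exact logGap_sq_le hr0 hr hs ht ha (sampleMean_pos hn hw _) (sampleMean_pos hn hw _)

end Halves

section SecondMoment

/-- The decay exponent `β` of the variance of the corrections. -/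
def mlmcRate (s t : ℝ) : ℝ := min (s * (t - 2) / (2 * t)) 2

/-- The factor, depending on the moment exponents only, in the bounds on the second moment of
the corrections. -/
def mlmcConst (s t : ℝ) : ℝ := 2 * (4 * mzConst (min s 4) + t ^ t + 2 ^ s * (2 * mzConst s))

/-- The moments of a weight `f` under `Q` that control the second moment of the corrections; the
summand `1` absorbs the moments of lower order. -/
def weightMoment {Ω : Type*} [MeasurableSpace Ω] (s t : ℝ) (Q : Measure Ω) (f : Ω → ℝ) : ℝ :=
  1 + ∫ ω, |f ω - 1| ^ s ∂Q + ∫ ω, |Real.log (f ω)| ^ t ∂Q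

variable {𝒳 𝒵 : Type*} {n : ℕ} {r s t a : ℝ}

theorem mlmcRate_le_half_min (hs : 0 ≤ s) (ht : 0 < t) : mlmcRate s t ≤ min s 4 / 2 := by
  have hst : s * (t - 2) / (2 * t) ≤ s / 2 := by
    rw [div_le_div_iff₀ (by positivity) two_pos]
    nlinarith
  rw [mlmcRate, le_div_iff₀ two_pos, le_min_iff]
  exact ⟨by linarith [min_le_left (s * (t - 2) / (2 * t)) 2],
    by linarith [min_le_right (s * (t - 2) / (2 * t)) 2]⟩

theorem rpow_neg_div_rpow {x : ℝ} (hx : 0 < x) (ht : 0 < t) :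
    (x ^ (-(s / t))) ^ (t / 2 - 1) = x ^ (-(s * (t - 2) / (2 * t))) := by
  rw [← Real.rpow_mul hx.le]
  congr 1
  field_simp

theorem inv_rpow_neg_div_mul {x : ℝ} (hx : 0 < x) (ht : 0 < t) :
    (x ^ (-(s / t)))⁻¹ * x ^ (-(s / 2)) = x ^ (-(s * (t - 2) / (2 * t))) := by
  rw [← Real.rpow_neg hx.le, ← Real.rpow_add hx]
  congr 1
  field_simp
  ring

theorem mlmcConst_pos (hs : 0 ≤ s) (ht : 0 < t) : 0 < mlmcConst s t := by
  have h1 := one_le_mzConst hs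
  have h2 := one_le_mzConst (le_min hs (by norm_num : (0 : ℝ) ≤ 4))
  rw [mlmcConst]
  positivity

theorem weightMoment_pos {Ω : Type*} [MeasurableSpace Ω] (Q : Measure Ω) (f : Ω → ℝ) :
    0 < weightMoment s t Q f := by
  rw [weightMoment]
  positivity

theorem measurable_uncurry_mlmcCorrection [MeasurableSpace 𝒳] [MeasurableSpace 𝒵]
    {w : 𝒳 → 𝒵 → ℝ} (hw : Measurable (Function.uncurry w)) :
    Measurable (Function.uncurry (mlmcCorrection w n)) := by
  have (k : Fin (2 * n)) : Measurable fun p : 𝒳 × (Fin (2 * n) → 𝒵) => w p.1 (p.2 k) :=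
    hw.comp (f := fun p : 𝒳 × (Fin (2 * n) → 𝒵) => (p.1, p.2 k)) (by fun_prop)
  simp only [Function.uncurry_def, mlmcCorrection]
  fun_prop

variable [MeasurableSpace 𝒵] {Q : Measure 𝒵} [IsProbabilityMeasure Q] {f : 𝒵 → ℝ}

theorem integrable_gapMajorant_sampleMean (hr : 0 < r) (hrs : r ≤ s) (hs : 1 ≤ s) (ht : 1 ≤ t)
    (hn : n ≠ 0) (hf : ∀ z, 0 < f z) (hfs : MemLp f (ENNReal.ofReal s) Q)
    (hft : Integrable (fun z => |Real.log (f z)| ^ t) Q) :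
    Integrable (fun zs : Fin n → 𝒵 => gapMajorant r s t a (sampleMean f zs))
      (Measure.pi fun _ => Q) := by
  have hfint : Integrable f Q := hfs.integrable (ENNReal.one_le_ofReal.2 hs)
  have hdev : MemLp (fun zs : Fin n → 𝒵 => sampleMean f zs - 1) (ENNReal.ofReal s)
      (Measure.pi fun _ => Q) := (memLp_sampleMean hfs).sub (memLp_const 1)
  exact (((integrable_abs_rpow hr (hdev.mono_exponent (ENNReal.ofReal_le_ofReal hrs))).const_mul
    2).add ((integrable_abs_log_sampleMean_rpow ht hn hf hfint hft).const_mul _)).add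
      ((integrable_abs_rpow (by linarith) hdev).const_mul _)

theorem integral_gapMajorant_sampleMean_le (hr : 2 ≤ r) (hrs : r ≤ s) (ht : 1 ≤ t) (ha : 0 < a)
    (hn : n ≠ 0) (hf : ∀ z, 0 < f z) (hf1 : ∫ z, f z ∂Q = 1)
    (hfs : MemLp f (ENNReal.ofReal s) Q)
    (hft : Integrable (fun z => |Real.log (f z)| ^ t) Q) :
    ∫ zs : Fin n → 𝒵, gapMajorant r s t a (sampleMean f zs) ∂(Measure.pi fun _ => Q) ≤
      4 * mzConst r * (n : ℝ) ^ (-(r / 2)) * (1 + ∫ z, |f z - 1| ^ s ∂Q)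
        + a ^ (t / 2 - 1) * (t ^ t * (1 + ∫ z, |Real.log (f z)| ^ t ∂Q))
        + a⁻¹ * 2 ^ s * (2 * mzConst s * (n : ℝ) ^ (-(s / 2)) * ∫ z, |f z - 1| ^ s ∂Q) := by
  have hs : 2 ≤ s := hr.trans hrs
  have hfint : Integrable f Q := hfs.integrable (ENNReal.one_le_ofReal.2 (by linarith))
  have hfr : MemLp f (ENNReal.ofReal r) Q := hfs.mono_exponent (ENNReal.ofReal_le_ofReal hrs)
  have hdev {p : ℝ} (hp : 2 ≤ p) (hfp : MemLp f (ENNReal.ofReal p) Q) :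
      Integrable (fun zs : Fin n → 𝒵 => |sampleMean f zs - 1| ^ p) (Measure.pi fun _ => Q) :=
    integrable_abs_rpow (by linarith) ((memLp_sampleMean hfp).sub (memLp_const 1))
  have hmr := integral_abs_sampleMean_sub_rpow_le hr hn hfr
  have hms := integral_abs_sampleMean_sub_rpow_le hs hn hfs
  have hlog := integral_abs_log_sampleMean_rpow_le ht hn hf hfint hft
  rw [hf1] at hmr hms hlog
  have hmono : ∫ z, |f z - 1| ^ r ∂Q ≤ 1 + ∫ z, |f z - 1| ^ s ∂Q :=
    integral_abs_rpow_le_one_add (by linarith) hrs (hfs.sub (memLp_const 1))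
  have hmz : 0 ≤ mzConst r := zero_le_one.trans (one_le_mzConst (by linarith))
  have hnear : 2 * ∫ zs : Fin n → 𝒵, |sampleMean f zs - 1| ^ r ∂(Measure.pi fun _ => Q) ≤
      4 * mzConst r * (n : ℝ) ^ (-(r / 2)) * (1 + ∫ z, |f z - 1| ^ s ∂Q) := by
    calc _ ≤ 2 * (2 * mzConst r * (n : ℝ) ^ (-(r / 2)) * (1 + ∫ z, |f z - 1| ^ s ∂Q)) := by
          gcongr
          exact hmr.trans (by gcongr)
      _ = _ := by ring
  have hi1 := (hdev hr hfr).const_mul 2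
  have hi2 := (integrable_abs_log_sampleMean_rpow ht hn hf hfint hft).const_mul (a ^ (t / 2 - 1))
  have hi3 := (hdev hs hfs).const_mul (a⁻¹ * 2 ^ s)
  simp only [gapMajorant]
  rw [integral_add (hi1.fun_add hi2) hi3, integral_add hi1 hi2, integral_const_mul,
    integral_const_mul, integral_const_mul]
  exact add_le_add (add_le_add hnear (by gcongr)) (by gcongr)

-- The truncation level `n ^ (s / t)` balances the two contributions of the event that a
-- half-sample mean is far from `1`.
theorem integral_gapMajorant_sampleMean_le_rpow_neg_mlmcRate (hs : 2 ≤ s) (ht : 2 ≤ t)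
    (hn : n ≠ 0) (hf : ∀ z, 0 < f z) (hf1 : ∫ z, f z ∂Q = 1)
    (hfs : MemLp f (ENNReal.ofReal s) Q)
    (hft : Integrable (fun z => |Real.log (f z)| ^ t) Q) :
    2 * ∫ zs : Fin n → 𝒵, gapMajorant (min s 4) s t ((n : ℝ) ^ (-(s / t))) (sampleMean f zs)
        ∂(Measure.pi fun _ => Q) ≤
      mlmcConst s t * weightMoment s t Q f * (n : ℝ) ^ (-mlmcRate s t) := by
  have hn0 : (0 : ℝ) < n := Nat.cast_pos.2 (Nat.pos_of_ne_zero hn)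
  have hn1 : (1 : ℝ) ≤ n := Nat.one_le_cast.2 (Nat.one_le_iff_ne_zero.2 hn)
  have ht0 : 0 < t := by linarith
  set M := ∫ z, |f z - 1| ^ s ∂Q
  set T := ∫ z, |Real.log (f z)| ^ t ∂Q
  set a := (n : ℝ) ^ (-(s / t))
  set d := (n : ℝ) ^ (-mlmcRate s t)
  have hM : 0 ≤ M := integral_nonneg fun _ => by positivity
  have hT : 0 ≤ T := integral_nonneg fun _ => by positivity
  have hMT : 1 + M ≤ 1 + M + T := le_add_of_nonneg_right hT
  have hTM : 1 + T ≤ 1 + M + T := by linarith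
  have hMH : M ≤ 1 + M + T := by linarith
  have hnear : (n : ℝ) ^ (-(min s 4 / 2)) ≤ d := Real.rpow_le_rpow_of_exponent_le hn1
    (neg_le_neg (mlmcRate_le_half_min (by linarith) (by linarith)))
  have hfar : (n : ℝ) ^ (-(s * (t - 2) / (2 * t))) ≤ d :=
    Real.rpow_le_rpow_of_exponent_le hn1 (neg_le_neg (min_le_left _ _))
  have hmr : 0 ≤ mzConst (min s 4) :=
    zero_le_one.trans (one_le_mzConst (le_min (by linarith) (by norm_num)))
  have hms : 0 ≤ mzConst s := zero_le_one.trans (one_le_mzConst (by linarith))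
  have hmain := integral_gapMajorant_sampleMean_le (a := a) (le_min hs (by norm_num))
    (min_le_left s 4) (by linarith) (by positivity) hn hf hf1 hfs hft
  calc _ ≤ 2 * (4 * mzConst (min s 4) * (n : ℝ) ^ (-(min s 4 / 2)) * (1 + M)
          + a ^ (t / 2 - 1) * (t ^ t * (1 + T))
          + a⁻¹ * 2 ^ s * (2 * mzConst s * (n : ℝ) ^ (-(s / 2)) * M)) := by gcongr
    _ = 2 * (4 * mzConst (min s 4) * (n : ℝ) ^ (-(min s 4 / 2)) * (1 + M)
          + (n : ℝ) ^ (-(s * (t - 2) / (2 * t))) * (t ^ t * (1 + T))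
          + (n : ℝ) ^ (-(s * (t - 2) / (2 * t))) * (2 ^ s * (2 * mzConst s * M))) := by
        rw [rpow_neg_div_rpow hn0 ht0, ← inv_rpow_neg_div_mul hn0 ht0]
        ring
    _ ≤ 2 * (4 * mzConst (min s 4) * d * (1 + M + T) + d * (t ^ t * (1 + M + T))
          + d * (2 ^ s * (2 * mzConst s * (1 + M + T)))) := by gcongr
    _ = mlmcConst s t * weightMoment s t Q f * d := by rw [mlmcConst, weightMoment]; ring

theorem integral_mlmcCorrection_sq_le {w : 𝒳 → 𝒵 → ℝ} {x : 𝒳} (hs : 2 ≤ s) (ht : 2 ≤ t)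
    (hn : n ≠ 0) (hw : ∀ z, 0 < w x z) (hw1 : ∫ z, w x z ∂Q = 1)
    (hws : MemLp (w x) (ENNReal.ofReal s) Q)
    (hwt : Integrable (fun z => |Real.log (w x z)| ^ t) Q) :
    ∫ zs, mlmcCorrection w n x zs ^ 2 ∂(Measure.pi fun _ => Q) ≤
      mlmcConst s t * weightMoment s t Q (w x) * (n : ℝ) ^ (-mlmcRate s t) := by
  have hr : (0 : ℝ) < min s 4 := lt_min (by linarith) (by norm_num)
  set G : (Fin n → 𝒵) → ℝ := fun zs =>
    gapMajorant (min s 4) s t ((n : ℝ) ^ (-(s / t))) (sampleMean (w x) zs)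
  have hG : Integrable G (Measure.pi fun _ => Q) :=
    integrable_gapMajorant_sampleMean hr (min_le_left _ _) (by linarith) (by linarith) hn hw hws
      hwt
  have hcomp {e : Fin n → Fin (2 * n)} (he : Function.Injective e) :
      Integrable (fun zs => G (zs ∘ e)) (Measure.pi fun _ => Q) :=
    (measurePreserving_comp_of_injective Q he).integrable_comp_of_integrable hG
  calc ∫ zs, mlmcCorrection w n x zs ^ 2 ∂(Measure.pi fun _ => Q)
      ≤ ∫ zs, (G (zs ∘ firstHalf n) + G (zs ∘ secondHalf n)) ∂(Measure.pi fun _ => Q) :=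
        integral_mono_of_nonneg (.of_forall fun _ => sq_nonneg _)
          ((hcomp firstHalf_injective).add (hcomp secondHalf_injective))
          (.of_forall (mlmcCorrection_sq_le hr (min_le_right _ _) (by linarith) ht (by positivity)
            hn hw))
    _ = 2 * ∫ zs, G zs ∂(Measure.pi fun _ => Q) := by
        rw [integral_add (hcomp firstHalf_injective) (hcomp secondHalf_injective),
          integral_comp_of_injective firstHalf_injective hG.1,
          integral_comp_of_injective secondHalf_injective hG.1, two_mul]
    _ ≤ mlmcConst s t * weightMoment s t Q (w x) * (n : ℝ) ^ (-mlmcRate s t) :=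
        integral_gapMajorant_sampleMean_le_rpow_neg_mlmcRate hs ht hn hw hw1 hws hwt

theorem integrable_mlmcCorrection_sq [MeasurableSpace 𝒳] {w : 𝒳 → 𝒵 → ℝ} {x : 𝒳} (hs : 1 ≤ s)
    (ht : 2 ≤ t) (hn : n ≠ 0) (hwm : Measurable (Function.uncurry w)) (hw : ∀ z, 0 < w x z)
    (hws : MemLp (w x) (ENNReal.ofReal s) Q)
    (hwt : Integrable (fun z => |Real.log (w x z)| ^ t) Q) :
    Integrable (fun zs => mlmcCorrection w n x zs ^ 2) (Measure.pi fun _ => Q) := by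
  have hr : (0 : ℝ) < min s 4 := lt_min (by linarith) (by norm_num)
  have hcomp {e : Fin n → Fin (2 * n)} (he : Function.Injective e) :
      Integrable (fun zs => gapMajorant (min s 4) s t 1 (sampleMean (w x) (zs ∘ e)))
        (Measure.pi fun _ => Q) :=
    (measurePreserving_comp_of_injective Q he).integrable_comp_of_integrable
      (integrable_gapMajorant_sampleMean hr (min_le_left _ _) hs (by linarith) hn hw hws hwt)
  refine ((hcomp firstHalf_injective).add (hcomp secondHalf_injective)).mono' ?_
    (.of_forall fun zs => ?_)
  · exact ((measurable_uncurry_mlmcCorrection hwm).of_uncurry_left.pow_const 2).aestronglyMeasurable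
  · rw [Real.norm_of_nonneg (sq_nonneg _)]
    exact mlmcCorrection_sq_le hr (min_le_right _ _) (by linarith) ht one_pos hn hw zs

end SecondMoment

section Joint

variable {𝒳 𝒵 : Type*} [MeasurableSpace 𝒳] [MeasurableSpace 𝒵]

/-- The kernel sending `x` to the law of `n` independent samples from `q x`. -/
def iidKernel (q : Kernel 𝒳 𝒵) [IsMarkovKernel q] (n : ℕ) : Kernel 𝒳 (Fin n → 𝒵) where
  toFun x := Measure.pi fun _ => q x
  measurable' := by
    refine Measurable.measure_of_isPiSystem_of_isProbabilityMeasure generateFrom_pi.symm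
      isPiSystem_pi ?_
    rintro _ ⟨S, hS, rfl⟩
    simp only [Measure.pi_pi]
    exact Finset.measurable_prod _ fun k _ => q.measurable_coe (hS k (Set.mem_univ k))

instance (q : Kernel 𝒳 𝒵) [IsMarkovKernel q] (n : ℕ) : IsMarkovKernel (iidKernel q n) :=
  ⟨fun x => inferInstanceAs (IsProbabilityMeasure (Measure.pi fun _ : Fin n => q x))⟩

variable {ν : Measure 𝒳} [IsProbabilityMeasure ν] {q : Kernel 𝒳 𝒵} [IsMarkovKernel q]
  {w : 𝒳 → 𝒵 → ℝ} {n : ℕ} {s t : ℝ}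

theorem jointExp_eq_integral_compProd {f : 𝒳 → (Fin n → 𝒵) → ℝ}
    (hf : Integrable (Function.uncurry f) (ν ⊗ₘ iidKernel q n)) :
    jointExp ν q n f = ∫ p, Function.uncurry f p ∂(ν ⊗ₘ iidKernel q n) :=
  (Measure.integral_compProd hf).symm

theorem mlmcCorrectionVar_eq_variance
    (hΔ : MemLp (Function.uncurry (mlmcCorrection w n)) 2 (ν ⊗ₘ iidKernel q (2 * n))) :
    mlmcCorrectionVar ν q w n =
      Var[Function.uncurry (mlmcCorrection w n); ν ⊗ₘ iidKernel q (2 * n)] := by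
  rw [mlmcCorrectionVar, jointExp_eq_integral_compProd (hΔ.integrable one_le_two),
    jointExp_eq_integral_compProd, variance_eq_integral hΔ.1.aemeasurable]
  · rfl
  · exact (hΔ.sub (memLp_const _)).integrable_sq

theorem integrable_compProd_of_ae_integral_le {α β : Type*} [MeasurableSpace α] [MeasurableSpace β]
    {μ : Measure α} [SFinite μ] {κ : Kernel α β} [IsSFiniteKernel κ] {f : α × β → ℝ} {H : α → ℝ}
    (hf : AEStronglyMeasurable f (μ ⊗ₘ κ)) (hf0 : ∀ p, 0 ≤ f p)
    (hfκ : ∀ᵐ x ∂μ, Integrable (fun y => f (x, y)) (κ x)) (hH : Integrable H μ)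
    (hfH : ∀ᵐ x ∂μ, ∫ y, f (x, y) ∂(κ x) ≤ H x) : Integrable f (μ ⊗ₘ κ) := by
  refine (Measure.integrable_compProd_iff hf).2 ⟨hfκ, ?_⟩
  simp only [Real.norm_of_nonneg (hf0 _)]
  refine hH.mono' (AEStronglyMeasurable.integral_kernel_compProd (a := ()) hf) ?_
  filter_upwards [hfH] with x hx
  rwa [Real.norm_of_nonneg (integral_nonneg fun y => hf0 (x, y))]

theorem ae_memLp_of_memLp_compProd {α β : Type*} [MeasurableSpace α] [MeasurableSpace β]
    {μ : Measure α} [SFinite μ] {κ : Kernel α β} [IsSFiniteKernel κ] {f : α → β → ℝ} {p : ℝ}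
    (hp : 0 < p) (hf : MemLp (Function.uncurry f) (ENNReal.ofReal p) (μ ⊗ₘ κ)) :
    ∀ᵐ x ∂μ, MemLp (f x) (ENNReal.ofReal p) (κ x) := by
  have hint := integrable_abs_rpow hp hf
  filter_upwards [hf.1.ae_of_compProd, hint.ae_of_compProd] with x hmeas hx
  exact (integrable_abs_rpow_iff_memLp hp hmeas).1 hx

theorem integrable_weightMoment (hs : 0 < s)
    (hws : MemLp (Function.uncurry w) (ENNReal.ofReal s) (ν ⊗ₘ q))
    (hwt : Integrable (fun p : 𝒳 × 𝒵 => |Real.log (w p.1 p.2)| ^ t) (ν ⊗ₘ q)) :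
    Integrable (fun x => weightMoment s t (q x) (w x)) ν :=
  ((integrable_const 1).add
    (integrable_abs_rpow hs (hws.sub (memLp_const 1))).integral_compProd).add hwt.integral_compProd

theorem integral_weightMoment (hs : 0 < s)
    (hws : MemLp (Function.uncurry w) (ENNReal.ofReal s) (ν ⊗ₘ q))
    (hwt : Integrable (fun p : 𝒳 × 𝒵 => |Real.log (w p.1 p.2)| ^ t) (ν ⊗ₘ q)) :
    ∫ x, weightMoment s t (q x) (w x) ∂ν = weightMoment s t (ν ⊗ₘ q) (Function.uncurry w) := by
  have hdev : Integrable (fun p => |Function.uncurry w p - 1| ^ s) (ν ⊗ₘ q) :=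
    integrable_abs_rpow hs (hws.sub (memLp_const 1))
  have hM : Integrable (fun x => ∫ z, |w x z - 1| ^ s ∂(q x)) ν := hdev.integral_compProd
  have hT : Integrable (fun x => ∫ z, |Real.log (w x z)| ^ t ∂(q x)) ν := hwt.integral_compProd
  simp only [weightMoment]
  rw [integral_add ((integrable_const 1).fun_add hM) hT, integral_add (integrable_const 1) hM,
    Measure.integral_compProd hdev, Measure.integral_compProd (by exact hwt)]
  simp

theorem ae_integral_mlmcCorrection_sq_le (hwpos : ∀ x z, 0 < w x z)
    (hw1 : ∀ᵐ x ∂ν, ∫ z, w x z ∂(q x) = 1) (hs : 2 ≤ s) (ht : 2 ≤ t)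
    (hws : MemLp (Function.uncurry w) (ENNReal.ofReal s) (ν ⊗ₘ q))
    (hwt : Integrable (fun p : 𝒳 × 𝒵 => |Real.log (w p.1 p.2)| ^ t) (ν ⊗ₘ q)) (hn : n ≠ 0) :
    ∀ᵐ x ∂ν, ∫ zs, mlmcCorrection w n x zs ^ 2 ∂(iidKernel q (2 * n) x) ≤
      mlmcConst s t * weightMoment s t (q x) (w x) * (n : ℝ) ^ (-mlmcRate s t) := by
  filter_upwards [hw1, ae_memLp_of_memLp_compProd (by linarith) hws,
    hwt.ae_of_compProd] with x hx1 hxs hxt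
  exact integral_mlmcCorrection_sq_le hs ht hn (hwpos x) hx1 hxs hxt

theorem memLp_two_mlmcCorrection (hw : Measurable (Function.uncurry w))
    (hwpos : ∀ x z, 0 < w x z) (hw1 : ∀ᵐ x ∂ν, ∫ z, w x z ∂(q x) = 1) (hs : 2 ≤ s) (ht : 2 ≤ t)
    (hws : MemLp (Function.uncurry w) (ENNReal.ofReal s) (ν ⊗ₘ q))
    (hwt : Integrable (fun p : 𝒳 × 𝒵 => |Real.log (w p.1 p.2)| ^ t) (ν ⊗ₘ q)) (hn : n ≠ 0) :
    MemLp (Function.uncurry (mlmcCorrection w n)) 2 (ν ⊗ₘ iidKernel q (2 * n)) := by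
  have hmeas := measurable_uncurry_mlmcCorrection (n := n) hw
  refine (memLp_two_iff_integrable_sq hmeas.aestronglyMeasurable).2
    (integrable_compProd_of_ae_integral_le (hmeas.pow_const 2).aestronglyMeasurable
      (fun _ => sq_nonneg _) ?_
      (((integrable_weightMoment (by linarith) hws hwt).const_mul _).mul_const _)
      (ae_integral_mlmcCorrection_sq_le hwpos hw1 hs ht hws hwt hn))
  filter_upwards [ae_memLp_of_memLp_compProd (by linarith) hws,
    hwt.ae_of_compProd] with x hxs hxt
  exact integrable_mlmcCorrection_sq (by linarith) ht hn hw (hwpos x) hxs hxt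

theorem mlmcCorrectionVar_le (hw : Measurable (Function.uncurry w))
    (hwpos : ∀ x z, 0 < w x z) (hw1 : ∀ᵐ x ∂ν, ∫ z, w x z ∂(q x) = 1) (hs : 2 ≤ s) (ht : 2 ≤ t)
    (hws : MemLp (Function.uncurry w) (ENNReal.ofReal s) (ν ⊗ₘ q))
    (hwt : Integrable (fun p : 𝒳 × 𝒵 => |Real.log (w p.1 p.2)| ^ t) (ν ⊗ₘ q)) (hn : n ≠ 0) :
    mlmcCorrectionVar ν q w n ≤
      mlmcConst s t * weightMoment s t (ν ⊗ₘ q) (Function.uncurry w)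
        * (n : ℝ) ^ (-mlmcRate s t) := by
  have hs0 : 0 < s := by linarith
  have hΔ := memLp_two_mlmcCorrection hw hwpos hw1 hs ht hws hwt hn
  have hΔsq := hΔ.integrable_sq
  calc mlmcCorrectionVar ν q w n
      = Var[Function.uncurry (mlmcCorrection w n); ν ⊗ₘ iidKernel q (2 * n)] :=
        mlmcCorrectionVar_eq_variance hΔ
    _ ≤ ∫ p, Function.uncurry (mlmcCorrection w n) p ^ 2 ∂(ν ⊗ₘ iidKernel q (2 * n)) :=
        variance_le_expectation_sq hΔ.1
    _ = ∫ x, ∫ zs, mlmcCorrection w n x zs ^ 2 ∂(iidKernel q (2 * n) x) ∂ν :=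
        Measure.integral_compProd hΔsq
    _ ≤ ∫ x, mlmcConst s t * weightMoment s t (q x) (w x) * (n : ℝ) ^ (-mlmcRate s t) ∂ν :=
        integral_mono_ae hΔsq.integral_compProd
          (((integrable_weightMoment hs0 hws hwt).const_mul _).mul_const _)
          (ae_integral_mlmcCorrection_sq_le hwpos hw1 hs ht hws hwt hn)
    _ = _ := by rw [integral_mul_const, integral_const_mul, integral_weightMoment hs0 hws hwt]

end Joint

theorem mlmc_evidence_variance_decay_general
    {𝒳 𝒵 : Type*} [MeasurableSpace 𝒳] [MeasurableSpace 𝒵]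
    (ν : Measure 𝒳) [IsProbabilityMeasure ν]
    (q : Kernel 𝒳 𝒵) [IsMarkovKernel q]
    (w : 𝒳 → 𝒵 → ℝ) (hw_meas : Measurable (Function.uncurry w))
    (hw_pos : ∀ x z, 0 < w x z)
    (hw_norm : ∀ᵐ x ∂ν, ∫ z, w x z ∂(q x) = 1)
    (s t : ℝ) (hs : 2 ≤ s) (ht : 2 ≤ t)
    (hws : Integrable (fun p : 𝒳 × 𝒵 => w p.1 p.2 ^ s) (ν ⊗ₘ q))
    (hwt : Integrable (fun p : 𝒳 × 𝒵 => |Real.log (w p.1 p.2)| ^ t) (ν ⊗ₘ q)) :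
    ∃ c > (0 : ℝ), ∀ ℓ : ℕ, 1 ≤ ℓ →
      mlmcCorrectionVar ν q w (2 ^ (ℓ - 1))
        ≤ c * (2 : ℝ) ^ (-(min (s * (t - 2) / (2 * t)) 2) * ℓ) := by
  have hwLp : MemLp (Function.uncurry w) (ENNReal.ofReal s) (ν ⊗ₘ q) := by
    refine (integrable_abs_rpow_iff_memLp (by linarith) hw_meas.aestronglyMeasurable).1 ?_
    simpa only [Function.uncurry_def, abs_of_pos (hw_pos _ _)] using hws
  refine ⟨mlmcConst s t * weightMoment s t (ν ⊗ₘ q) (Function.uncurry w) * 2 ^ mlmcRate s t,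
    mul_pos (mul_pos (mlmcConst_pos (by linarith) (by linarith)) (weightMoment_pos _ _))
      (Real.rpow_pos_of_pos two_pos _), fun ℓ hℓ => ?_⟩
  have hscale : (((2 ^ (ℓ - 1) : ℕ) : ℝ)) ^ (-mlmcRate s t) =
      2 ^ mlmcRate s t * 2 ^ (-mlmcRate s t * ℓ) := by
    rw [Nat.cast_pow, Nat.cast_ofNat, ← Real.rpow_natCast_mul zero_le_two, Nat.cast_sub hℓ,
      ← Real.rpow_add two_pos]
    congr 1
    push_cast
    ring
  have hbound := mlmcCorrectionVar_le hw_meas hw_pos hw_norm hs ht hwLp hwt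
    (pow_ne_zero (ℓ - 1) two_ne_zero)
  rwa [hscale, ← mul_assoc] at hbound

/-- **Variance decay of the coupled MLMC corrections for the model evidence**
(Theorem 2 of the paper).  Let `X ~ ν` and, conditionally on `X`, let `Z₁, Z₂, …` be i.i.d.
with law `q(·; X)`; let `w > 0` be the normalized importance weight, with
`∫ w(x,z) q(dz;x) = 1` for a.e. `x`.  If `E[w^s] < ∞` and `E[|log w|^t] < ∞` for some
`s, t > 2` with `(s−2)(t−2) ≥ 4`, then the coupled level-`ℓ` correction
`Δ_ℓ = log Ȳ_{2^ℓ} − ½(log Ȳ_{2^{ℓ−1}}⁽ᵃ⁾ + log Ȳ_{2^{ℓ−1}}⁽ᵇ⁾)` satisfies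
`Var[Δ_ℓ] ≤ c·2^{−βℓ}` with `β = min(s(t−2)/(2t), 2)`. -/
theorem mlmc_evidence_variance_decay
    {𝒳 𝒵 : Type*} [MeasurableSpace 𝒳] [MeasurableSpace 𝒵]
    (ν : Measure 𝒳) [IsProbabilityMeasure ν]
    (q : Kernel 𝒳 𝒵) [IsMarkovKernel q]
    (w : 𝒳 → 𝒵 → ℝ) (hw_meas : Measurable (Function.uncurry w))
    (hw_pos : ∀ x z, 0 < w x z)
    (hw_norm : ∀ᵐ x ∂ν, ∫ z, w x z ∂(q x) = 1)
    (s t : ℝ) (hs : 2 < s) (ht : 2 < t) (hst : 4 ≤ (s - 2) * (t - 2))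
    (hws : Integrable (fun p : 𝒳 × 𝒵 => w p.1 p.2 ^ s) (ν ⊗ₘ q))
    (hwt : Integrable (fun p : 𝒳 × 𝒵 => |Real.log (w p.1 p.2)| ^ t) (ν ⊗ₘ q)) :
    ∃ c > (0 : ℝ), ∀ ℓ : ℕ, 1 ≤ ℓ →
      mlmcCorrectionVar ν q w (2 ^ (ℓ - 1))
        ≤ c * (2 : ℝ) ^ (-(min (s * (t - 2) / (2 * t)) 2) * ℓ) :=
  mlmc_evidence_variance_decay_general ν q w hw_meas hw_pos hw_norm s t hs.le ht.le hws hwt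
end
end

section
/- Suppose there exist real numbers s, t > 2 with (s−2)(t−2) ≥ 4 such that E[w(X, Z_1)^s] < ∞ and E[|log w(X, Z_1)|^t] < ∞. Then there exists a constant c > 0 such that for every ℓ ≥ 0 the bias of the level-2^ℓ importance-sampling estimator of the model evidence satisfies |E[log Ȳ_{2^ℓ}]| ≤ c·2^{−αℓ}, where α = min(s(t−1)/(2t), 1). (Since the weights are normalized, E[log Ȳ_K] equals the difference between the expected level-K estimator and the true model evidence.) -/
open MeasureTheory ProbabilityTheory Finset
open scoped ENNReal

noncomputable section

/-!
Fix the data point and write `L = E|log w|`, `v = Var w`. Since `E Ȳ = 1`, the inequality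
`log y ≤ y - 1` gives `E[log Ȳ] ≤ 0`. For the other direction, expand to second order where
`Ȳ ≥ 1/2`, which costs `2 v / n`, and use Jensen, `-log Ȳ ≤ (1/n) ∑ |log wᵢ|`, where `Ȳ < 1/2`.
As the weights are positive, `Ȳ < 1/2` forces `∑_{j ≠ i} wⱼ < n/2`, an event that is independent of
`wᵢ` and, by Chebyshev, has probability at most `min(1, 4 (v + 1) / n)`. Hence

`|E[log Ȳ]| ≤ 2 v / n + L * min(1, 4 (v + 1) / n)`.

Bounding the minimum by `(4 (v + 1) / n) ^ α` and averaging over the data point leaves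
`E[L * (v + 1) ^ α]`. As `v + 1 = E[w²]` and `1 / t + 2 α / s ≤ 1`, this is finite by Jensen and
Young, and `α = min(s (t - 1) / (2 t), 1)` is the largest exponent in `[0, 1]` of this kind.
-/

open scoped BigOperators

theorem min_one_le_rpow {x θ : ℝ} (hx : 0 ≤ x) (hθ₀ : 0 ≤ θ) (hθ₁ : θ ≤ 1) :
    min 1 x ≤ x ^ θ := by
  rcases le_total x 1 with h | h
  · exact (min_le_right _ _).trans (Real.self_le_rpow_of_le_one hx h hθ₁)
  · exact (min_le_left _ _).trans (Real.one_le_rpow h hθ₀)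

theorem min_one_div_le_mul_rpow_neg {m n θ : ℝ} (hm : 0 ≤ m) (hn : 0 < n) (hθ₀ : 0 ≤ θ)
    (hθ₁ : θ ≤ 1) : min 1 (4 * m / n) ≤ 4 * m ^ θ * n ^ (-θ) := by
  calc min 1 (4 * m / n) ≤ (4 * m / n) ^ θ := min_one_le_rpow (by positivity) hθ₀ hθ₁
    _ = 4 ^ θ * m ^ θ * n ^ (-θ) := by
      rw [Real.div_rpow (by positivity) hn.le, Real.mul_rpow (by norm_num) hm,
        Real.rpow_neg hn.le, div_eq_mul_inv]
    _ ≤ 4 * m ^ θ * n ^ (-θ) := by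
      gcongr
      exact Real.rpow_le_self_of_one_le (by norm_num) hθ₁

theorem mul_rpow_le_one_add_rpow_add_rpow {a b p r θ : ℝ} (ha : 0 ≤ a) (hb : 0 ≤ b)
    (hp : 0 < p) (hr : 0 < r) (hθ : 0 ≤ θ) (h : p⁻¹ + θ / r ≤ 1) :
    a * b ^ θ ≤ 1 + a ^ p + b ^ r := by
  set M := 1 + a ^ p + b ^ r
  have hap : 0 ≤ a ^ p := Real.rpow_nonneg ha p
  have hbr : 0 ≤ b ^ r := Real.rpow_nonneg hb r
  have hM : 1 ≤ M := by linarith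
  have hM₀ : 0 < M := by linarith
  have haM : a ≤ M ^ p⁻¹ := (Real.le_rpow_inv_iff_of_pos ha hM₀.le hp).2 (by linarith)
  have hbM : b ≤ M ^ r⁻¹ := (Real.le_rpow_inv_iff_of_pos hb hM₀.le hr).2 (by linarith)
  calc a * b ^ θ ≤ M ^ p⁻¹ * (M ^ r⁻¹) ^ θ := by gcongr
    _ = M ^ (p⁻¹ + θ / r) := by
      rw [Real.rpow_add hM₀, ← Real.rpow_mul hM₀.le, inv_mul_eq_div]
    _ ≤ M ^ (1 : ℝ) := Real.rpow_le_rpow_of_exponent_le hM h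
    _ = M := Real.rpow_one M

theorem neg_log_le_of_half_le {y : ℝ} (hy : 1 / 2 ≤ y) :
    -Real.log y ≤ 1 - y + 2 * (y - 1) ^ 2 := by
  have hy₀ : 0 < y := by linarith
  calc -Real.log y = Real.log y⁻¹ := (Real.log_inv y).symm
    _ ≤ y⁻¹ - 1 := Real.log_le_sub_one_of_pos (inv_pos.2 hy₀)
    _ = 1 - y + y⁻¹ * (y - 1) ^ 2 := by field_simp; ring
    _ ≤ 1 - y + 2 * (y - 1) ^ 2 := by
      gcongr
      exact inv_le_of_inv_le₀ two_pos (by linarith)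

section Expect

variable {ι : Type*} [Fintype ι]

theorem memLp_expect {Ω : Type*} [MeasurableSpace Ω] {P : Measure Ω} {X : ι → Ω → ℝ} {p : ℝ≥0∞}
    (hX : ∀ i, MemLp (X i) p P) : MemLp (fun ω => 𝔼 i, X i ω) p P := by
  simpa only [Fintype.expect_eq_sum_div_card, div_eq_inv_mul] using
    (memLp_finsetSum univ fun i _ => hX i).const_mul (Fintype.card ι : ℝ)⁻¹

theorem integrable_expect {Ω : Type*} [MeasurableSpace Ω] {P : Measure Ω} {X : ι → Ω → ℝ}
    (hX : ∀ i, Integrable (X i) P) : Integrable (fun ω => 𝔼 i, X i ω) P :=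
  memLp_one_iff_integrable.1 (memLp_expect fun i => memLp_one_iff_integrable.2 (hX i))

theorem integral_expect {Ω : Type*} [MeasurableSpace Ω] {P : Measure Ω} {X : ι → Ω → ℝ}
    (hX : ∀ i, Integrable (X i) P) : ∫ ω, 𝔼 i, X i ω ∂P = 𝔼 i, P[X i] := by
  simp only [Fintype.expect_eq_sum_div_card]
  rw [integral_div, integral_finsetSum _ fun i _ => hX i]

variable [Nonempty ι]

theorem neg_log_expect_le_expect_abs_log {a : ι → ℝ} (ha : ∀ i, 0 < a i) :
    -Real.log (𝔼 i, a i) ≤ 𝔼 i, |Real.log (a i)| := by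
  have jensen := strictConcaveOn_log_Ioi.concaveOn.neg.map_centerMass_le (t := univ)
    (w := fun _ => (1 : ℝ)) (p := a) (by simp) (by simp [Fintype.card_pos]) (fun i _ => ha i)
  have h : -Real.log (𝔼 i, a i) ≤ 𝔼 i, -Real.log (a i) := by
    simpa [centerMass, Fintype.expect_eq_sum_div_card, div_eq_inv_mul] using jensen
  exact h.trans (expect_le_expect fun i _ => neg_le_abs _)

theorem abs_log_expect_le {a : ι → ℝ} (ha : ∀ i, 0 < a i) :
    |Real.log (𝔼 i, a i)| ≤ 𝔼 i, a i + 𝔼 i, |Real.log (a i)| := by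
  have hpos : 0 < 𝔼 i, a i := expect_pos (fun i _ => ha i) univ_nonempty
  have hlog : 0 ≤ 𝔼 i, |Real.log (a i)| := expect_nonneg fun i _ => abs_nonneg _
  rw [abs_le']
  constructor
  · linarith [Real.log_le_self hpos.le]
  · linarith [neg_log_expect_le_expect_abs_log ha]

theorem neg_log_expect_le [DecidableEq ι] {a : ι → ℝ} (ha : ∀ i, 0 < a i) :
    -Real.log (𝔼 i, a i) ≤ 1 - 𝔼 i, a i + 2 * (𝔼 i, a i - 1) ^ 2 +
      𝔼 i, |Real.log (a i)| *
        (Set.Iio (Fintype.card ι / 2 : ℝ)).indicator 1 (∑ j ∈ univ.erase i, a j) := by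
  rcases le_or_gt (1 / 2) (𝔼 i, a i) with h | h
  · refine (neg_log_le_of_half_le h).trans (le_add_of_nonneg_right (expect_nonneg fun i _ => ?_))
    exact mul_nonneg (abs_nonneg _) (Set.indicator_nonneg (fun _ _ => zero_le_one) _)
  · have hsum : ∑ i, a i < Fintype.card ι / 2 := by
      rw [Fintype.expect_eq_sum_div_card, div_lt_iff₀ (Nat.cast_pos.2 Fintype.card_pos)] at h
      linarith
    have hlow (i : ι) : ∑ j ∈ univ.erase i, a j ∈ Set.Iio (Fintype.card ι / 2 : ℝ) :=
      (sum_le_sum_of_subset_of_nonneg (erase_subset i univ) fun j _ _ => (ha j).le).trans_lt hsum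
    simp only [Set.indicator_of_mem (hlow _), Pi.one_apply, mul_one]
    linarith [neg_log_expect_le_expect_abs_log ha, sq_nonneg (𝔼 i, a i - 1)]

end Expect

theorem rpow_integral_le_integral_rpow {Ω : Type*} [MeasurableSpace Ω] {P : Measure Ω}
    [IsProbabilityMeasure P] {g : Ω → ℝ} {p : ℝ} (hp : 1 ≤ p) (hg₀ : ∀ᵐ ω ∂P, 0 ≤ g ω)
    (hg : Integrable g P) (hgp : Integrable (fun ω => g ω ^ p) P) :
    (∫ ω, g ω ∂P) ^ p ≤ ∫ ω, g ω ^ p ∂P :=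
  (convexOn_rpow hp).map_integral_le
    (continuousOn_id.rpow_const fun _ _ => .inr (zero_le_one.trans hp)) isClosed_Ici hg₀ hg hgp

theorem integrable_mul_indicator {Ω 𝒮 : Type*} [MeasurableSpace Ω] [MeasurableSpace 𝒮]
    {P : Measure Ω} {X : Ω → ℝ} {S : Ω → 𝒮} {B : Set 𝒮} (hX : Integrable X P)
    (hS : AEMeasurable S P) (hB : MeasurableSet B) :
    Integrable (fun ω => X ω * B.indicator 1 (S ω)) P :=
  hX.mul_bdd (c := 1)
    ((measurable_one.indicator hB).comp_aemeasurable hS).aestronglyMeasurable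
    (ae_of_all _ fun ω => by by_cases h : S ω ∈ B <;> simp [h])

theorem integral_mul_indicator_of_indepFun {Ω 𝒮 : Type*} [MeasurableSpace Ω] [MeasurableSpace 𝒮]
    {P : Measure Ω} {X : Ω → ℝ} {S : Ω → 𝒮} {B : Set 𝒮} (hind : X ⟂ᵢ[P] S)
    (hX : AEStronglyMeasurable X P) (hS : AEMeasurable S P) (hB : MeasurableSet B) :
    ∫ ω, X ω * B.indicator 1 (S ω) ∂P = P[X] * P.real (S ⁻¹' B) := by
  have hB₁ : Measurable (B.indicator (1 : 𝒮 → ℝ)) := measurable_one.indicator hB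
  have hindep : X ⟂ᵢ[P] fun ω => B.indicator (1 : 𝒮 → ℝ) (S ω) := hind.comp measurable_id hB₁
  rw [hindep.integral_fun_mul_eq_mul_integral hX (hB₁.comp_aemeasurable hS).aestronglyMeasurable,
    ← integral_map hS hB₁.aestronglyMeasurable, integral_indicator_one hB,
    map_measureReal_apply_of_aemeasurable hS hB]

section IdenticallyDistributed

variable {Ω 𝒵 ι : Type*} [MeasurableSpace Ω] [MeasurableSpace 𝒵] {P : Measure Ω} {μ : Measure 𝒵}
  {Y : ι → Ω → ℝ} {f : 𝒵 → ℝ}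

theorem ae_forall_pos_of_identDistrib [Countable ι] (hident : ∀ i, IdentDistrib (Y i) f P μ)
    (hf : ∀ᵐ z ∂μ, 0 < f z) : ∀ᵐ ω ∂P, ∀ i, 0 < Y i ω :=
  ae_all_iff.2 fun i => (hident i).symm.ae_snd measurableSet_Ioi hf

theorem integral_sq_sum_sub [IsProbabilityMeasure P] (hind : Pairwise fun i j => Y i ⟂ᵢ[P] Y j)
    (hident : ∀ i, IdentDistrib (Y i) f P μ) (hf : MemLp f 2 μ) (A : Finset ι) (c : ℝ) :
    ∫ ω, (∑ i ∈ A, Y i ω - c) ^ 2 ∂P = #A * Var[f; μ] + (#A * μ[f] - c) ^ 2 := by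
  have hY (i : ι) : MemLp (Y i) 2 P := (hident i).memLp_iff.2 hf
  have hS : MemLp (fun ω => ∑ i ∈ A, Y i ω) 2 P := memLp_finsetSum A fun i _ => hY i
  have hmean : ∫ ω, ∑ i ∈ A, Y i ω ∂P = #A * μ[f] := by
    rw [integral_finsetSum _ fun i _ => (hY i).integrable one_le_two]
    simp [fun i => (hident i).integral_eq]
  have hvar : Var[fun ω => ∑ i ∈ A, Y i ω; P] = #A * Var[f; μ] := by
    have h := IndepFun.variance_sum (s := A) (fun i _ => hY i) (hind.set_pairwise _)
    simpa [← sum_fn, fun i => (hident i).variance_eq] using h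
  have h := variance_eq_sub (hS.sub (memLp_const c))
  rw [← hvar, ← variance_sub_const hS.aestronglyMeasurable c, ← hmean]
  simp only [Pi.sub_def, Pi.pow_apply] at h
  rw [h, integral_sub (hS.integrable one_le_two) (integrable_const c)]
  simp

variable [Fintype ι]

theorem integrable_expect_of_identDistrib (hident : ∀ i, IdentDistrib (Y i) f P μ)
    (hf : Integrable f μ) : Integrable (fun ω => 𝔼 i, Y i ω) P :=
  integrable_expect fun i => (hident i).integrable_iff.2 hf

theorem integral_expect_of_identDistrib [Nonempty ι] (hident : ∀ i, IdentDistrib (Y i) f P μ)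
    (hf : Integrable f μ) : ∫ ω, 𝔼 i, Y i ω ∂P = μ[f] := by
  rw [integral_expect fun i => (hident i).integrable_iff.2 hf]
  simp only [fun i => (hident i).integral_eq, Fintype.expect_const]

theorem integrable_log_expect [Nonempty ι] (hident : ∀ i, IdentDistrib (Y i) f P μ)
    (hpos : ∀ᵐ z ∂μ, 0 < f z) (hf : Integrable f μ)
    (hlog : Integrable (fun z => |Real.log (f z)|) μ) :
    Integrable (fun ω => Real.log (𝔼 i, Y i ω)) P := by
  have hY := integrable_expect_of_identDistrib hident hf
  have hlogY := integrable_expect_of_identDistrib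
    (fun i => (hident i).comp Real.measurable_log.abs) hlog
  refine (hY.add hlogY).mono' (Real.measurable_log.comp_aemeasurable
    hY.aemeasurable).aestronglyMeasurable ?_
  filter_upwards [ae_forall_pos_of_identDistrib hident hpos] with ω hω
  exact abs_log_expect_le hω

theorem integral_log_expect_nonpos [Nonempty ι] [IsProbabilityMeasure P]
    (hident : ∀ i, IdentDistrib (Y i) f P μ) (hpos : ∀ᵐ z ∂μ, 0 < f z) (hmean : μ[f] = 1)
    (hlog : Integrable (fun z => |Real.log (f z)|) μ) :
    ∫ ω, Real.log (𝔼 i, Y i ω) ∂P ≤ 0 := by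
  have hf : Integrable f μ := .of_integral_ne_zero (by simp [hmean])
  have hY := integrable_expect_of_identDistrib hident hf
  calc ∫ ω, Real.log (𝔼 i, Y i ω) ∂P
      ≤ ∫ ω, (𝔼 i, Y i ω - 1) ∂P := by
        refine integral_mono_ae (integrable_log_expect hident hpos hf hlog)
          (hY.sub (integrable_const 1)) ?_
        filter_upwards [ae_forall_pos_of_identDistrib hident hpos] with ω hω
        exact Real.log_le_sub_one_of_pos (expect_pos (fun i _ => hω i) univ_nonempty)
    _ = 0 := by
        rw [integral_sub hY (integrable_const 1), integral_expect_of_identDistrib hident hf, hmean]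
        simp

end IdenticallyDistributed

section Independent

variable {Ω 𝒵 ι : Type*} [MeasurableSpace Ω] [MeasurableSpace 𝒵] {P : Measure Ω} {μ : Measure 𝒵}
  [Fintype ι] {Y : ι → Ω → ℝ} {f : 𝒵 → ℝ}

theorem integral_sq_expect_sub_mean [Nonempty ι] [IsProbabilityMeasure P]
    (hind : Pairwise fun i j => Y i ⟂ᵢ[P] Y j) (hident : ∀ i, IdentDistrib (Y i) f P μ)
    (hf : MemLp f 2 μ) :
    ∫ ω, (𝔼 i, Y i ω - μ[f]) ^ 2 ∂P = Var[f; μ] / Fintype.card ι := by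
  have hn : (Fintype.card ι : ℝ) ≠ 0 := Nat.cast_ne_zero.2 Fintype.card_ne_zero
  have h := integral_sq_sum_sub hind hident hf univ (Fintype.card ι * μ[f])
  rw [card_univ, sub_self, zero_pow two_ne_zero, add_zero] at h
  have hsq (ω : Ω) : (𝔼 i, Y i ω - μ[f]) ^ 2 =
      (∑ i, Y i ω - Fintype.card ι * μ[f]) ^ 2 / (Fintype.card ι : ℝ) ^ 2 := by
    rw [Fintype.expect_eq_sum_div_card]; field_simp
  simp only [hsq]
  rw [integral_div, h]
  field_simp

theorem measureReal_sum_erase_lt_half_card_le [DecidableEq ι] [IsProbabilityMeasure P]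
    (hind : Pairwise fun i j => Y i ⟂ᵢ[P] Y j) (hident : ∀ i, IdentDistrib (Y i) f P μ)
    (hf : MemLp f 2 μ) (hmean : μ[f] = 1) (i : ι) :
    P.real {ω | ∑ j ∈ univ.erase i, Y j ω < Fintype.card ι / 2} ≤
      4 * (Var[f; μ] + 1) / Fintype.card ι := by
  set n : ℝ := (Fintype.card ι : ℝ)
  have : Nonempty ι := ⟨i⟩
  have hn : 0 < n := Nat.cast_pos.2 Fintype.card_pos
  have hn₁ : 1 ≤ n := Nat.one_le_cast.2 Fintype.card_pos
  have hmoment : ∫ ω, (∑ j ∈ univ.erase i, Y j ω - n) ^ 2 ∂P = (n - 1) * Var[f; μ] + 1 := by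
    rw [integral_sq_sum_sub hind hident hf, card_erase_of_mem (mem_univ i), card_univ, hmean,
      Nat.cast_pred Fintype.card_pos]
    ring
  have hS : MemLp (fun ω => ∑ j ∈ univ.erase i, Y j ω) 2 P :=
    memLp_finsetSum _ fun j _ => (hident j).memLp_iff.2 hf
  have hmarkov := mul_meas_ge_le_integral_of_nonneg (μ := P) (ae_of_all _ fun ω => sq_nonneg _)
    (hS.sub (memLp_const n)).integrable_sq ((n / 2) ^ 2)
  simp only [Pi.sub_apply, hmoment] at hmarkov
  have hsubset : {ω | ∑ j ∈ univ.erase i, Y j ω < n / 2} ⊆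
      {ω | (n / 2) ^ 2 ≤ (∑ j ∈ univ.erase i, Y j ω - n) ^ 2} := fun ω hω => by
    simp only [Set.mem_ofPred_eq] at hω ⊢
    nlinarith
  have hvar : (n - 1) * Var[f; μ] + 1 ≤ n * (Var[f; μ] + 1) := by
    linarith [variance_nonneg f μ]
  calc P.real {ω | ∑ j ∈ univ.erase i, Y j ω < n / 2}
      ≤ P.real {ω | (n / 2) ^ 2 ≤ (∑ j ∈ univ.erase i, Y j ω - n) ^ 2} := measureReal_mono hsubset
    _ ≤ n * (Var[f; μ] + 1) / (n / 2) ^ 2 :=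
      (le_div_iff₀' (by positivity)).2 (hmarkov.trans hvar)
    _ = 4 * (Var[f; μ] + 1) / n := by field_simp; norm_num

theorem integral_abs_log_mul_indicator_sum_erase_le [DecidableEq ι] [IsProbabilityMeasure P]
    (hind : iIndepFun Y P) (hident : ∀ i, IdentDistrib (Y i) f P μ) (hf : MemLp f 2 μ)
    (hmean : μ[f] = 1) (i : ι) :
    ∫ ω, |Real.log (Y i ω)| *
        (Set.Iio (Fintype.card ι / 2 : ℝ)).indicator 1 (∑ j ∈ univ.erase i, Y j ω) ∂P ≤
      (∫ z, |Real.log (f z)| ∂μ) * min 1 (4 * (Var[f; μ] + 1) / Fintype.card ι) := by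
  have hY (j : ι) : AEMeasurable (Y j) P := (hident j).aemeasurable_fst
  have hS : AEMeasurable (fun ω => ∑ j ∈ univ.erase i, Y j ω) P := by fun_prop
  have hindep : (fun ω => |Real.log (Y i ω)|) ⟂ᵢ[P] fun ω => ∑ j ∈ univ.erase i, Y j ω := by
    have h := (hind.indepFun_finsetSum_of_notMem₀ hY (notMem_erase i univ)).symm
    rw [sum_fn] at h
    exact h.comp Real.measurable_log.abs measurable_id
  have hlog_eq : ∫ ω, |Real.log (Y i ω)| ∂P = ∫ z, |Real.log (f z)| ∂μ :=
    ((hident i).comp Real.measurable_log.abs).integral_eq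
  rw [integral_mul_indicator_of_indepFun hindep
    (Real.measurable_log.abs.comp_aemeasurable (hY i)).aestronglyMeasurable hS measurableSet_Iio,
    hlog_eq]
  refine mul_le_mul_of_nonneg_left (le_min measureReal_le_one ?_)
    (integral_nonneg fun z => abs_nonneg _)
  exact measureReal_sum_erase_lt_half_card_le (fun _ _ h => hind.indepFun h) hident hf hmean i

theorem integrable_one_sub_expect_add_sq [IsFiniteMeasure P]
    (hident : ∀ i, IdentDistrib (Y i) f P μ) (hf : MemLp f 2 μ) :
    Integrable (fun ω => 1 - 𝔼 i, Y i ω + 2 * (𝔼 i, Y i ω - 1) ^ 2) P :=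
  have h := memLp_expect fun i => (hident i).memLp_iff.2 hf
  ((integrable_const 1).sub (h.integrable one_le_two)).add
    ((h.sub (memLp_const 1)).integrable_sq.const_mul 2)

theorem integral_one_sub_expect_add_sq [Nonempty ι] [IsProbabilityMeasure P]
    (hind : Pairwise fun i j => Y i ⟂ᵢ[P] Y j) (hident : ∀ i, IdentDistrib (Y i) f P μ)
    (hf : MemLp f 2 μ) (hmean : μ[f] = 1) :
    ∫ ω, (1 - 𝔼 i, Y i ω + 2 * (𝔼 i, Y i ω - 1) ^ 2) ∂P =
      2 * Var[f; μ] / Fintype.card ι := by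
  have hY := memLp_expect fun i => (hident i).memLp_iff.2 hf
  have hY₁ := hY.integrable one_le_two
  have hsq : Integrable (fun ω => 2 * (𝔼 i, Y i ω - 1) ^ 2) P :=
    (hY.sub (memLp_const 1)).integrable_sq.const_mul 2
  have hmean_Y : ∫ ω, 𝔼 i, Y i ω ∂P = 1 :=
    (integral_expect_of_identDistrib hident (.of_integral_ne_zero (by simp [hmean]))).trans hmean
  have hvar := integral_sq_expect_sub_mean hind hident hf
  rw [hmean] at hvar
  have hlin : Integrable (fun ω => 1 - 𝔼 i, Y i ω) P := (integrable_const 1).sub hY₁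
  rw [integral_add hlin hsq, integral_sub (integrable_const 1) hY₁,
    integral_const_mul, hvar, hmean_Y]
  simp [mul_div_assoc]

theorem neg_integral_log_expect_le [Nonempty ι] [IsProbabilityMeasure P] (hind : iIndepFun Y P)
    (hident : ∀ i, IdentDistrib (Y i) f P μ) (hpos : ∀ᵐ z ∂μ, 0 < f z) (hf : MemLp f 2 μ)
    (hmean : μ[f] = 1) (hlog : Integrable (fun z => |Real.log (f z)|) μ) :
    -∫ ω, Real.log (𝔼 i, Y i ω) ∂P ≤ 2 * Var[f; μ] / Fintype.card ι +
      (∫ z, |Real.log (f z)| ∂μ) * min 1 (4 * (Var[f; μ] + 1) / Fintype.card ι) := by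
  classical
  set T : ι → Ω → ℝ := fun i ω => |Real.log (Y i ω)| *
    (Set.Iio (Fintype.card ι / 2 : ℝ)).indicator 1 (∑ j ∈ univ.erase i, Y j ω)
  have hT (i : ι) : Integrable (T i) P :=
    integrable_mul_indicator (((hident i).comp Real.measurable_log.abs).integrable_iff.2 hlog)
      (aemeasurable_fun_sum _ fun j _ => (hident j).aemeasurable_fst) measurableSet_Iio
  have hf₁ : Integrable f μ := .of_integral_ne_zero (by simp [hmean])
  have hmain := integrable_one_sub_expect_add_sq hident hf
  calc -∫ ω, Real.log (𝔼 i, Y i ω) ∂P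
      = ∫ ω, -Real.log (𝔼 i, Y i ω) ∂P := (integral_neg _).symm
    _ ≤ ∫ ω, (1 - 𝔼 i, Y i ω + 2 * (𝔼 i, Y i ω - 1) ^ 2 + 𝔼 i, T i ω) ∂P := by
        refine integral_mono_ae (integrable_log_expect hident hpos hf₁ hlog).neg
          (hmain.add (integrable_expect hT)) ?_
        filter_upwards [ae_forall_pos_of_identDistrib hident hpos] with ω hω
        exact neg_log_expect_le hω
    _ = 2 * Var[f; μ] / Fintype.card ι + 𝔼 i, P[T i] := by
        rw [integral_add hmain (integrable_expect hT), integral_expect hT,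
          integral_one_sub_expect_add_sq (fun _ _ h => hind.indepFun h) hident hf hmean]
    _ ≤ _ := by
        gcongr
        exact expect_le univ_nonempty fun i _ =>
          integral_abs_log_mul_indicator_sum_erase_le hind hident hf hmean i

theorem abs_integral_log_expect_le [Nonempty ι] [IsProbabilityMeasure P] (hind : iIndepFun Y P)
    (hident : ∀ i, IdentDistrib (Y i) f P μ) (hpos : ∀ᵐ z ∂μ, 0 < f z) (hf : MemLp f 2 μ)
    (hmean : μ[f] = 1) (hlog : Integrable (fun z => |Real.log (f z)|) μ) :
    |∫ ω, Real.log (𝔼 i, Y i ω) ∂P| ≤ 2 * Var[f; μ] / Fintype.card ι +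
      (∫ z, |Real.log (f z)| ∂μ) * min 1 (4 * (Var[f; μ] + 1) / Fintype.card ι) := by
  rw [abs_of_nonpos (integral_log_expect_nonpos hident hpos hmean hlog)]
  exact neg_integral_log_expect_le hind hident hpos hf hmean hlog

end Independent

section MomentBounds

variable {𝒵 : Type*} [MeasurableSpace 𝒵] {μ : Measure 𝒵} {f : 𝒵 → ℝ}

theorem integrable_rpow_of_le [IsFiniteMeasure μ] {g : 𝒵 → ℝ} {p r : ℝ}
    (hg : AEStronglyMeasurable g μ) (hg₀ : ∀ᵐ z ∂μ, 0 ≤ g z) (hp : 0 ≤ p) (hpr : p ≤ r)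
    (hgr : Integrable (fun z => g z ^ r) μ) : Integrable (fun z => g z ^ p) μ := by
  have hnorm (k : ℝ) : (fun z => g z ^ k) =ᵐ[μ] fun z => ‖g z‖ ^ k :=
    hg₀.mono fun z hz => by simp only [Real.norm_of_nonneg hz]
  rw [integrable_congr (hnorm _)] at hgr ⊢
  exact integrable_norm_rpow_of_le hg hp (hp.trans hpr) hpr hgr

theorem rpow_variance_add_one_le [IsProbabilityMeasure μ] {s : ℝ} (hs : 2 ≤ s)
    (hpos : ∀ᵐ z ∂μ, 0 < f z) (hf : MemLp f 2 μ) (hmean : μ[f] = 1)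
    (hfs : Integrable (fun z => f z ^ s) μ) :
    (Var[f; μ] + 1) ^ (s / 2) ≤ ∫ z, f z ^ s ∂μ := by
  have hvar : Var[f; μ] + 1 = ∫ z, f z ^ 2 ∂μ := by
    have h := variance_eq_sub hf
    rw [hmean] at h
    simp only [Pi.pow_apply] at h
    linarith
  have hpow : (fun z => (f z ^ 2) ^ (s / 2)) =ᵐ[μ] fun z => f z ^ s := by
    filter_upwards [hpos] with z hz
    rw [← Real.rpow_natCast_mul hz.le, Nat.cast_ofNat, mul_div_cancel₀ s two_ne_zero]
  rw [hvar, ← integral_congr_ae hpow]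
  exact rpow_integral_le_integral_rpow (by linarith) (ae_of_all _ fun z => sq_nonneg _)
    hf.integrable_sq (hfs.congr hpow.symm)

theorem memLp_two_of_integrable_rpow [IsFiniteMeasure μ] {s : ℝ} (hs : 2 ≤ s)
    (hf : AEStronglyMeasurable f μ) (hf₀ : ∀ᵐ z ∂μ, 0 ≤ f z)
    (hfs : Integrable (fun z => f z ^ s) μ) : MemLp f 2 μ := by
  rw [memLp_two_iff_integrable_sq hf]
  simpa using integrable_rpow_of_le hf hf₀ zero_le_two hs hfs

theorem abs_integral_log_expect_le_mul_rpow_neg {Ω ι : Type*} [MeasurableSpace Ω]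
    {P : Measure Ω} [IsProbabilityMeasure P] [IsProbabilityMeasure μ] [Fintype ι] [Nonempty ι]
    {Y : ι → Ω → ℝ} (hind : iIndepFun Y P) (hident : ∀ i, IdentDistrib (Y i) f P μ)
    (hpos : ∀ᵐ z ∂μ, 0 < f z) (hmean : μ[f] = 1) {s t θ : ℝ} (hs : 2 ≤ s) (ht : 1 ≤ t)
    (hθ₀ : 0 ≤ θ) (hθ₁ : θ ≤ 1) (hθ : t⁻¹ + θ / (s / 2) ≤ 1)
    (hfs : Integrable (fun z => f z ^ s) μ) (hft : Integrable (fun z => |Real.log (f z)| ^ t) μ) :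
    |∫ ω, Real.log (𝔼 i, Y i ω) ∂P| ≤
      6 * (1 + ∫ z, |Real.log (f z)| ^ t ∂μ + ∫ z, f z ^ s ∂μ) * (Fintype.card ι : ℝ) ^ (-θ) := by
  have hf : AEStronglyMeasurable f μ :=
    (Integrable.of_integral_ne_zero (by simp [hmean])).aestronglyMeasurable
  have hf₂ : MemLp f 2 μ := memLp_two_of_integrable_rpow hs hf (hpos.mono fun _ h => h.le) hfs
  have hlog : Integrable (fun z => |Real.log (f z)|) μ := by
    simpa using integrable_rpow_of_le
      (Real.measurable_log.abs.comp_aemeasurable hf.aemeasurable).aestronglyMeasurable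
      (ae_of_all _ fun z => abs_nonneg (Real.log (f z))) zero_le_one ht hft
  set n : ℝ := (Fintype.card ι : ℝ)
  set m := Var[f; μ] + 1
  set L := ∫ z, |Real.log (f z)| ∂μ
  set T := ∫ z, |Real.log (f z)| ^ t ∂μ
  set S := ∫ z, f z ^ s ∂μ
  have hn : 1 ≤ n := Nat.one_le_cast.2 Fintype.card_pos
  have hm : 1 ≤ m := le_add_of_nonneg_left (variance_nonneg f μ)
  have hL : 0 ≤ L := integral_nonneg fun z => abs_nonneg _
  have hT : L ^ t ≤ T :=
    rpow_integral_le_integral_rpow ht (ae_of_all _ fun z => abs_nonneg _) hlog hft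
  have hS : m ^ (s / 2) ≤ S := rpow_variance_add_one_le hs hpos hf₂ hmean hfs
  have hmS : m ≤ S := (Real.self_le_rpow_of_one_le hm (by linarith)).trans hS
  have hyoung : L * m ^ θ ≤ 1 + L ^ t + m ^ (s / 2) :=
    mul_rpow_le_one_add_rpow_add_rpow hL (by linarith) (by linarith) (by linarith) hθ₀ hθ
  have hvar : Var[f; μ] / n ≤ m * n ^ (-θ) := by
    rw [div_eq_mul_inv, ← Real.rpow_neg_one]
    gcongr
    exact le_add_of_nonneg_right zero_le_one
  calc |∫ ω, Real.log (𝔼 i, Y i ω) ∂P|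
      ≤ 2 * Var[f; μ] / n + L * min 1 (4 * m / n) :=
        abs_integral_log_expect_le hind hident hpos hf₂ hmean hlog
    _ = 2 * (Var[f; μ] / n) + L * min 1 (4 * m / n) := by rw [mul_div_assoc]
    _ ≤ 2 * (m * n ^ (-θ)) + L * (4 * m ^ θ * n ^ (-θ)) := by
        gcongr
        exact min_one_div_le_mul_rpow_neg (by linarith) (by linarith) hθ₀ hθ₁
    _ = (2 * m + 4 * (L * m ^ θ)) * n ^ (-θ) := by ring
    _ ≤ 6 * (1 + T + S) * n ^ (-θ) := by
        gcongr
        linarith [Real.rpow_nonneg hL t]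

theorem abs_integral_log_pi_le [IsProbabilityMeasure μ] {n : ℕ} [NeZero n]
    (hpos : ∀ᵐ z ∂μ, 0 < f z) (hmean : μ[f] = 1) {s t θ : ℝ} (hs : 2 ≤ s) (ht : 1 ≤ t)
    (hθ₀ : 0 ≤ θ) (hθ₁ : θ ≤ 1) (hθ : t⁻¹ + θ / (s / 2) ≤ 1)
    (hfs : Integrable (fun z => f z ^ s) μ) (hft : Integrable (fun z => |Real.log (f z)| ^ t) μ) :
    |∫ zs, Real.log ((∑ k, f (zs k)) / n) ∂(Measure.pi fun _ : Fin n => μ)| ≤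
      6 * (1 + ∫ z, |Real.log (f z)| ^ t ∂μ + ∫ z, f z ^ s ∂μ) * (n : ℝ) ^ (-θ) := by
  have hf : AEMeasurable f μ := (Integrable.of_integral_ne_zero (by simp [hmean])).aemeasurable
  have hind : iIndepFun (fun (k : Fin n) zs => f (zs k)) (Measure.pi fun _ : Fin n => μ) :=
    iIndepFun_pi fun _ => hf
  have hident (k : Fin n) :
      IdentDistrib (fun zs : Fin n → 𝒵 => f (zs k)) f (Measure.pi fun _ => μ) μ :=
    have heval := measurePreserving_eval (fun _ : Fin n => μ) k
    have hid : IdentDistrib (fun zs : Fin n → 𝒵 => zs k) id (Measure.pi fun _ => μ) μ :=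
      ⟨heval.aemeasurable, aemeasurable_id, heval.map_eq.trans Measure.map_id.symm⟩
    hid.comp_of_aemeasurable (heval.map_eq.symm ▸ hf)
  simpa only [Fintype.expect_eq_sum_div_card, Fintype.card_fin] using
    abs_integral_log_expect_le_mul_rpow_neg hind hident hpos hmean hs ht hθ₀ hθ₁ hθ hfs hft

end MomentBounds

theorem inv_add_min_div_half_le_one {s t : ℝ} (hs : 0 < s) (ht : 0 < t) :
    t⁻¹ + min (s * (t - 1) / (2 * t)) 1 / (s / 2) ≤ 1 := by
  calc t⁻¹ + min (s * (t - 1) / (2 * t)) 1 / (s / 2)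
      ≤ t⁻¹ + s * (t - 1) / (2 * t) / (s / 2) := by gcongr; exact min_le_left _ _
    _ = 1 := by field_simp; ring

theorem evidence_bias_decay_general
    {𝒳 𝒵 : Type*} [MeasurableSpace 𝒳] [MeasurableSpace 𝒵]
    (ν : Measure 𝒳) [IsProbabilityMeasure ν] (q : Kernel 𝒳 𝒵) [IsMarkovKernel q]
    (w : 𝒳 → 𝒵 → ℝ) (hw_pos : ∀ᵐ x ∂ν, ∀ᵐ z ∂(q x), 0 < w x z)
    (hw_norm : ∀ᵐ x ∂ν, ∫ z, w x z ∂(q x) = 1) (s t : ℝ) (hs : 2 ≤ s) (ht : 1 ≤ t)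
    (hws : Integrable (fun p : 𝒳 × 𝒵 => w p.1 p.2 ^ s) (ν ⊗ₘ q))
    (hwt : Integrable (fun p : 𝒳 × 𝒵 => |Real.log (w p.1 p.2)| ^ t) (ν ⊗ₘ q))
    (n : ℕ) [NeZero n] :
    |jointExp ν q n (fun x zs => Real.log ((∑ k, w x (zs k)) / n))| ≤
      6 * (1 + ∫ p, |Real.log (w p.1 p.2)| ^ t ∂(ν ⊗ₘ q) + ∫ p, w p.1 p.2 ^ s ∂(ν ⊗ₘ q)) *
        (n : ℝ) ^ (-(min (s * (t - 1) / (2 * t)) 1)) := by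
  set α := min (s * (t - 1) / (2 * t)) 1
  have hα₀ : 0 ≤ α :=
    le_min (div_nonneg (mul_nonneg (by linarith) (by linarith)) (by linarith)) zero_le_one
  have hα : t⁻¹ + α / (s / 2) ≤ 1 := inv_add_min_div_half_le_one (by linarith) (by linarith)
  have hbound : ∀ᵐ x ∂ν, ‖∫ zs, Real.log ((∑ k, w x (zs k)) / n)
      ∂(Measure.pi fun _ : Fin n => q x)‖ ≤
        6 * (1 + ∫ z, |Real.log (w x z)| ^ t ∂(q x) + ∫ z, w x z ^ s ∂(q x)) * (n : ℝ) ^ (-α) := by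
    filter_upwards [hw_pos, hw_norm,
      ((Measure.integrable_compProd_iff hws.aestronglyMeasurable).1 hws).1,
      ((Measure.integrable_compProd_iff hwt.aestronglyMeasurable).1 hwt).1]
      with x hpos hmean hxs hxt
    exact abs_integral_log_pi_le hpos hmean hs ht hα₀ (min_le_right _ _) hα hxs hxt
  have hT : Integrable (fun x => ∫ z, |Real.log (w x z)| ^ t ∂(q x)) ν := hwt.integral_compProd
  have hS : Integrable (fun x => ∫ z, w x z ^ s ∂(q x)) ν := hws.integral_compProd
  have hT₁ : Integrable (fun x => 1 + ∫ z, |Real.log (w x z)| ^ t ∂(q x)) ν :=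
    (integrable_const 1).add hT
  rw [jointExp, Measure.integral_compProd hwt, Measure.integral_compProd hws]
  refine (norm_integral_le_of_norm_le (((hT₁.add hS).const_mul 6).mul_const _) hbound).trans_eq ?_
  simp only [Pi.add_apply]
  rw [integral_mul_const, integral_const_mul, integral_add hT₁ hS,
    integral_add (integrable_const 1) hT]
  simp

/-- **Bias decay of the importance-sampling evidence estimator** (Theorem 2 of the paper).
Let `X ~ ν` and, conditionally on `X`, let `Z₁, Z₂, …` be i.i.d. with law `q(·; X)`; let
`w > 0` be the normalized importance weight, `∫ w(x,z) q(dz;x) = 1` for a.e. `x`, and let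
`Ȳ_K = (1/K)∑_{k=1}^K w(X, Z_k)`.  If `E[w^s] < ∞` and `E[|log w|^t] < ∞` for some
`s, t > 2` with `(s−2)(t−2) ≥ 4`, then the bias of the level-`2^ℓ` estimator satisfies
`|E[log Ȳ_{2^ℓ}]| ≤ c·2^{−αℓ}` with `α = min(s(t−1)/(2t), 1)` (by normalization of the
weights, `E[log Ȳ_K]` is exactly the difference between the expected level-`K` estimator
and the true model evidence). -/
theorem evidence_bias_decay
    {𝒳 𝒵 : Type*} [MeasurableSpace 𝒳] [MeasurableSpace 𝒵]
    (ν : Measure 𝒳) [IsProbabilityMeasure ν]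
    (q : Kernel 𝒳 𝒵) [IsMarkovKernel q]
    (w : 𝒳 → 𝒵 → ℝ) (hw_meas : Measurable (Function.uncurry w))
    (hw_pos : ∀ x z, 0 < w x z)
    (hw_norm : ∀ᵐ x ∂ν, ∫ z, w x z ∂(q x) = 1)
    (s t : ℝ) (hs : 2 < s) (ht : 2 < t) (hst : 4 ≤ (s - 2) * (t - 2))
    (hws : Integrable (fun p : 𝒳 × 𝒵 => w p.1 p.2 ^ s) (ν ⊗ₘ q))
    (hwt : Integrable (fun p : 𝒳 × 𝒵 => |Real.log (w p.1 p.2)| ^ t) (ν ⊗ₘ q)) :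
    ∃ c > (0 : ℝ), ∀ ℓ : ℕ,
      |jointExp ν q (2 ^ ℓ) (fun x zs => Real.log ((∑ k, w x (zs k)) / 2 ^ ℓ))|
        ≤ c * (2 : ℝ) ^ (-(min (s * (t - 1) / (2 * t)) 1) * ℓ) := by
  set T := ∫ p, |Real.log (w p.1 p.2)| ^ t ∂(ν ⊗ₘ q)
  set S := ∫ p, w p.1 p.2 ^ s ∂(ν ⊗ₘ q)
  have hT : 0 ≤ T := integral_nonneg fun p => by positivity
  have hS : 0 ≤ S := integral_nonneg fun p => Real.rpow_nonneg (hw_pos _ _).le s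
  refine ⟨6 * (1 + T + S), by linarith, fun ℓ => ?_⟩
  have h := evidence_bias_decay_general ν q w (ae_of_all _ fun x => ae_of_all _ (hw_pos x)) hw_norm
    s t hs.le (by linarith) hws hwt (2 ^ ℓ)
  rwa [Nat.cast_pow, Nat.cast_ofNat, ← Real.rpow_natCast_mul zero_le_two, mul_comm (ℓ : ℝ)] at h
end
end
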